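/- arXiv:1804.02785 — 3 statements merged into one kernel-verified Lean document; each statement's English description precedes it below -/
import Mathlib

section
/- For every constant 0 < δ < 1 there exist a constant c > 0 and an integer N (both depending only on δ) such that the following holds for all n ≥ N. Let H = (V, E) be an unweighted graph equal to a star S_n plus a subgraph H[V'] = (V', E') supported on the n leaves V'. If H[V'] has no path cover 𝒫 with |𝒫| < δn, then for every edge set P ⊆ E' with |P| ≤ n − 1, log T(S_n + P) ≤ (1 − c) · log T(F_n). -/
open Matrix

/-- The Laplacian matrix of a weighted graph given by a weight function. -/
def lapG {V : Type*} [Fintype V] [DecidableEq V] (W : V → V → ℝ) : Matrix V V ℝ :=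
  fun i j => if i = j then ∑ k, W i k else -(W i j)

/-- The (weighted) number of spanning trees: determinant of the Laplacian with the
row and column of the last vertex removed. -/
def nst {n : ℕ} (W : Fin (n + 1) → Fin (n + 1) → ℝ) : ℝ :=
  ((lapG W).submatrix Fin.castSucc Fin.castSucc).det

/-- The star graph `S_n`: the central vertex is `Fin.last n`, joined to the `n`
leaves `0, …, n-1` by unit-weight edges. -/
def starW (n : ℕ) : Fin (n + 1) → Fin (n + 1) → ℝ :=
  fun i j => if i ≠ j ∧ (i = Fin.last n ∨ j = Fin.last n) then 1 else 0

/-- The fan graph `F_n`: the star `S_n` plus a path of `n - 1` unit-weight edges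
through the `n` leaves. -/
def fanW (n : ℕ) : Fin (n + 1) → Fin (n + 1) → ℝ :=
  fun i j => starW n i j +
    if ((i : ℕ) + 1 = (j : ℕ) ∧ j ≠ Fin.last n) ∨
       ((j : ℕ) + 1 = (i : ℕ) ∧ i ≠ Fin.last n) then 1 else 0

/-- The star `S_n` plus the set `P` of unit-weight edges between leaves. -/
def starPlusEdges (n : ℕ) (P : Finset (Sym2 (Fin n))) : Fin (n + 1) → Fin (n + 1) → ℝ :=
  fun i j => starW n i j +
    if ∃ a b : Fin n, i = a.castSucc ∧ j = b.castSucc ∧ s(a, b) ∈ P then 1 else 0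

/-- `Ps` is a path cover of the graph on the `n` leaves with edge set `E`:
each member is a nonempty duplicate-free list whose consecutive pairs are
edges of `E`, the members are pairwise vertex-disjoint, and every leaf is covered. -/
def IsPathCoverOf (n : ℕ) (E : Finset (Sym2 (Fin n))) (Ps : List (List (Fin n))) : Prop :=
  (∀ l ∈ Ps, l ≠ [] ∧ l.Nodup ∧ l.Chain' (fun a b => s(a, b) ∈ E)) ∧
    Ps.Pairwise (fun l₁ l₂ => ∀ x ∈ l₁, x ∉ l₂) ∧
    (∀ v : Fin n, ∃ l ∈ Ps, v ∈ l)

/-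
Ground the center of the star: the spanning trees of `S_n + P` are counted by `det (1 + L)`, where
`L` is the Laplacian of `P`, and a new edge multiplies this determinant by one plus the effective
resistance between its ends. A path on `k` vertices alone has determinant `F_{2k}`, and
`√5 * F_{2k} = φ ^ (2 * k) - φ ^ (-2 * k)`; in particular the fan has about `φ ^ (2 * n)` spanning
trees.

Build `P` from a path cover of minimal size. The paths contribute the product of the `F_{2k}`, and
since `P` has at most `n` edges there is at most one further edge per path. By minimality a further
edge cannot join the ends of two different paths, so it either closes a path to a cycle or has an
end with two neighbors on its path. Either way it costs a factor of at most `√5`, apart from an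
edge to a still isolated vertex, whose excess is charged to that vertex. Hence each path falls
short of `φ ^ (2 * k)` by a factor depending on `k`. There are at least `δ * n` paths, of mean
length at most `1 / δ`, and by convexity the total loss is exponential in `n`.
-/

open Real goldenRatio

section RankOneUpdate

variable {V : Type*} [Fintype V] [DecidableEq V] {A : Matrix V V ℝ}

lemma det_add_vecMulVec_self (hA : IsUnit A.det) (v : V → ℝ) :
    (A + vecMulVec v v).det = A.det * (1 + v ⬝ᵥ A⁻¹ *ᵥ v) := by
  rw [vecMulVec_eq Unit, det_add_replicateCol_mul_replicateRow hA, det_unique (n := Unit),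
    Matrix.add_apply, one_apply_eq, Matrix.mul_assoc, ← replicateCol_mulVec,
    replicateRow_mul_replicateCol_apply]

lemma mulVec_inv_mulVec (hA : A.PosDef) (v : V → ℝ) : A *ᵥ (A⁻¹ *ᵥ v) = v := by
  rw [mulVec_mulVec, mul_nonsing_inv _ hA.det_pos.ne'.isUnit, one_mulVec]

lemma dotProduct_inv_mulVec_nonneg (hA : A.PosDef) (v : V → ℝ) : 0 ≤ v ⬝ᵥ A⁻¹ *ᵥ v := by
  simpa using hA.inv.posSemidef.dotProduct_mulVec_nonneg v

lemma sq_dotProduct_le (hA : A.PosDef) (v x : V → ℝ) :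
    (v ⬝ᵥ x) ^ 2 ≤ (v ⬝ᵥ A⁻¹ *ᵥ v) * (x ⬝ᵥ A *ᵥ x) := by
  set y := A⁻¹ *ᵥ v
  have hAy : A *ᵥ y = v := mulVec_inv_mulVec hA v
  have hsymm : y ⬝ᵥ A *ᵥ x = v ⬝ᵥ x := by
    have hAT : Aᵀ = A := by simpa using hA.isHermitian.eq
    rw [dotProduct_mulVec, ← mulVec_transpose, hAT, hAy]
  have hquad (t : ℝ) :
      0 ≤ (v ⬝ᵥ y) * (t * t) + (-2 * (v ⬝ᵥ x)) * t + x ⬝ᵥ A *ᵥ x := by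
    have hnonneg := hA.posSemidef.dotProduct_mulVec_nonneg (x - t • y)
    simp only [star_trivial, mulVec_sub, mulVec_smul, hAy, sub_dotProduct, dotProduct_sub,
      smul_dotProduct, dotProduct_smul, hsymm, smul_eq_mul, dotProduct_comm x v,
      dotProduct_comm y v] at hnonneg
    linarith
  have hdiscrim := discrim_le_zero hquad
  rw [discrim] at hdiscrim
  linarith

lemma dotProduct_inv_mulVec_le (hA : A.PosDef) {v : V → ℝ} {C : ℝ} (hC : 0 ≤ C)
    (h : ∀ x, (v ⬝ᵥ x) ^ 2 ≤ C * (x ⬝ᵥ A *ᵥ x)) : v ⬝ᵥ A⁻¹ *ᵥ v ≤ C := by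
  have hy := h (A⁻¹ *ᵥ v)
  rw [mulVec_inv_mulVec hA, dotProduct_comm _ v, sq] at hy
  rcases (dotProduct_inv_mulVec_nonneg hA v).eq_or_lt with h0 | hpos
  · exact h0 ▸ hC
  · exact le_of_mul_le_mul_right hy hpos

end RankOneUpdate

section ConeLaplacian

variable {V : Type*}

/-- The squared difference of the potential `x` across an edge: the energy it dissipates. -/
def sqDiff (x : V → ℝ) : Sym2 V → ℝ :=
  Sym2.lift ⟨fun a b => (x a - x b) ^ 2, fun a b => by ring⟩

@[simp]
lemma sqDiff_mk (x : V → ℝ) (a b : V) : sqDiff x s(a, b) = (x a - x b) ^ 2 := rfl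

lemma sqDiff_nonneg (x : V → ℝ) (e : Sym2 V) : 0 ≤ sqDiff x e := by
  induction e with
  | _ a b => exact sq_nonneg _

variable [DecidableEq V]

/-- The signed indicator vector `1_a - 1_b` of an edge `ab`. -/
def edgeVec (a b : V) : V → ℝ := Pi.single a 1 - Pi.single b 1

lemma edgeVec_swap (a b : V) : edgeVec b a = -edgeVec a b := by simp [edgeVec]

/-- The Laplacian `(1_a - 1_b)(1_a - 1_b)ᵀ` of the graph with the single edge `ab`; it vanishes
on loops. -/
def edgeLap : Sym2 V → Matrix V V ℝ :=
  Sym2.lift ⟨fun a b => vecMulVec (edgeVec a b) (edgeVec a b), fun a b => by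
    simp only [edgeVec_swap a b, neg_vecMulVec, vecMulVec_neg, neg_neg]⟩

@[simp]
lemma edgeLap_mk (a b : V) : edgeLap s(a, b) = vecMulVec (edgeVec a b) (edgeVec a b) := rfl

/-- The Laplacian of the cone over the graph `(V, S)`, with the row and column of the apex
removed. By the matrix-tree theorem its determinant counts the spanning trees of the cone. -/
def coneLap (S : Finset (Sym2 V)) : Matrix V V ℝ := 1 + ∑ e ∈ S, edgeLap e

lemma edgeLap_posSemidef [Finite V] (e : Sym2 V) : (edgeLap e).PosSemidef := by
  induction e with
  | _ a b => simpa using posSemidef_vecMulVec_self_star (edgeVec a b)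

lemma coneLap_posDef [Finite V] (S : Finset (Sym2 V)) : (coneLap S).PosDef :=
  PosDef.one.add_posSemidef (posSemidef_sum S fun e _ => edgeLap_posSemidef e)

variable [Fintype V]

/-- The energy dissipated in the cone over `(V, S)` by the potential `x`, the apex being
grounded. -/
def energy (S : Finset (Sym2 V)) (x : V → ℝ) : ℝ := ∑ v, x v ^ 2 + ∑ e ∈ S, sqDiff x e

lemma edgeVec_dotProduct (a b : V) (x : V → ℝ) : edgeVec a b ⬝ᵥ x = x a - x b := by
  simp [edgeVec, sub_dotProduct]

lemma dotProduct_edgeLap_mulVec (e : Sym2 V) (x : V → ℝ) :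
    x ⬝ᵥ edgeLap e *ᵥ x = sqDiff x e := by
  induction e with
  | _ a b =>
    simp [vecMulVec_mulVec, edgeVec_dotProduct, dotProduct_comm x, sq]

lemma dotProduct_coneLap_mulVec (S : Finset (Sym2 V)) (x : V → ℝ) :
    x ⬝ᵥ coneLap S *ᵥ x = energy S x := by
  simp only [coneLap, energy, add_mulVec, one_mulVec, sum_mulVec, dotProduct_add,
    dotProduct_sum, dotProduct_edgeLap_mulVec]
  simp only [dotProduct, sq]

lemma coneLap_det_pos (S : Finset (Sym2 V)) : 0 < (coneLap S).det := (coneLap_posDef S).det_pos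

lemma energy_insert {S : Finset (Sym2 V)} {e : Sym2 V} (he : e ∉ S) (x : V → ℝ) :
    energy (insert e S) x = energy S x + sqDiff x e := by
  rw [energy, energy, Finset.sum_insert he]
  ring

lemma det_coneLap_insert {S : Finset (Sym2 V)} {a b : V} (hab : s(a, b) ∉ S) :
    (coneLap (insert s(a, b) S)).det =
      (coneLap S).det * (1 + edgeVec a b ⬝ᵥ (coneLap S)⁻¹ *ᵥ edgeVec a b) := by
  rw [← det_add_vecMulVec_self (coneLap_det_pos S).ne'.isUnit, coneLap, Finset.sum_insert hab,
    edgeLap_mk, add_comm (vecMulVec _ _), ← add_assoc, coneLap]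

lemma det_coneLap_insert_le (S : Finset (Sym2 V)) {a b : V} {C : ℝ} (hC : 0 ≤ C)
    (h : ∀ x : V → ℝ, (x a - x b) ^ 2 ≤ C * energy S x) :
    (coneLap (insert s(a, b) S)).det ≤ (1 + C) * (coneLap S).det := by
  have hdet := (coneLap_det_pos S).le
  by_cases hab : s(a, b) ∈ S
  · rw [Finset.insert_eq_of_mem hab]
    exact le_mul_of_one_le_left hdet (by linarith)
  · rw [det_coneLap_insert hab, mul_comm]
    gcongr
    refine dotProduct_inv_mulVec_le (coneLap_posDef S) hC fun x => ?_
    rw [edgeVec_dotProduct, dotProduct_coneLap_mulVec]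
    exact h x

lemma det_mul_energy_insert_le {S : Finset (Sym2 V)} {e : Sym2 V} (he : e ∉ S) (x : V → ℝ) :
    (coneLap S).det * energy (insert e S) x ≤ (coneLap (insert e S)).det * energy S x := by
  induction e with
  | _ a b =>
    have hcs := sq_dotProduct_le (coneLap_posDef S) (edgeVec a b) x
    rw [edgeVec_dotProduct, dotProduct_coneLap_mulVec] at hcs
    rw [det_coneLap_insert he, energy_insert he, sqDiff_mk, mul_assoc, add_mul, one_mul]
    gcongr
    exact (coneLap_det_pos S).le

lemma energy_update {S : Finset (Sym2 V)} {a : V} (ha : ∀ e ∈ S, a ∉ e) {x : V → ℝ}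
    (hx : x a = 0) (t : ℝ) : energy S (Function.update x a t) = energy S x + t ^ 2 := by
  have hvertices : ∑ v, Function.update x a t v ^ 2 = ∑ v, x v ^ 2 + t ^ 2 := by
    rw [Fintype.sum_eq_add_sum_compl a, Fintype.sum_eq_add_sum_compl a (fun v => x v ^ 2), hx,
      Function.update_self,
      Finset.sum_congr rfl fun v hv => by rw [Function.update_of_ne (by simpa using hv)]]
    ring
  have hedges : ∑ e ∈ S, sqDiff (Function.update x a t) e = ∑ e ∈ S, sqDiff x e := by
    refine Finset.sum_congr rfl fun e he => ?_
    induction e with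
    | _ u v =>
      obtain ⟨hu, hv⟩ : a ≠ u ∧ a ≠ v := by simpa using ha _ he
      rw [sqDiff_mk, sqDiff_mk, Function.update_of_ne hu.symm, Function.update_of_ne hv.symm]
  rw [energy, energy, hvertices, hedges]
  ring

end ConeLaplacian

section PathEdges

variable {V : Type*}

/-- The edges of the path that visits the vertices of the list in order. -/
def pathEdges (l : List V) : List (Sym2 V) := List.zipWith (fun a b => s(a, b)) l l.tail

@[simp]
lemma pathEdges_singleton (a : V) : pathEdges [a] = [] := rfl

@[simp]
lemma pathEdges_cons_cons (a b : V) (l : List V) :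
    pathEdges (a :: b :: l) = s(a, b) :: pathEdges (b :: l) := rfl

lemma length_pathEdges (l : List V) : (pathEdges l).length = l.length - 1 := by
  simp [pathEdges]

lemma mem_pathEdges {l : List V} {e : Sym2 V} :
    e ∈ pathEdges l ↔ ∃ (i : ℕ) (_ : i + 1 < l.length), e = s(l[i], l[i + 1]) := by
  simp only [pathEdges, List.mem_iff_getElem, List.length_zipWith, List.length_tail,
    List.getElem_zipWith, List.getElem_tail]
  grind

lemma mem_of_mem_pathEdges {l : List V} {e : Sym2 V} (he : e ∈ pathEdges l) {v : V}
    (hv : v ∈ e) : v ∈ l := by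
  obtain ⟨i, hi, rfl⟩ := mem_pathEdges.1 he
  rcases Sym2.mem_iff.1 hv with rfl | rfl <;> exact List.getElem_mem _

lemma notMem_of_mem_pathEdges {a : V} {l : List V} (ha : a ∉ l) {e : Sym2 V}
    (he : e ∈ pathEdges l) : a ∉ e := fun hae => ha (mem_of_mem_pathEdges he hae)

lemma nodup_pathEdges : ∀ {l : List V}, l.Nodup → (pathEdges l).Nodup
  | [], _ | [_], _ => List.nodup_nil
  | a :: b :: l, h => by
    obtain ⟨ha, hl⟩ := List.nodup_cons.1 h
    exact List.nodup_cons.2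
      ⟨fun hab => notMem_of_mem_pathEdges ha hab (Sym2.mem_mk_left a b), nodup_pathEdges hl⟩

lemma nodup_flatMap_pathEdges {Ps : List (List V)} (h : Ps.flatten.Nodup) :
    (Ps.flatMap pathEdges).Nodup := by
  obtain ⟨hnodup, hdisj⟩ := List.nodup_flatten.1 h
  refine List.nodup_flatMap.2 ⟨fun l hl => nodup_pathEdges (hnodup l hl), hdisj.imp ?_⟩
  intro l₁ l₂ h₁₂ e he₁ he₂
  induction e with
  | _ a b =>
    exact h₁₂ (mem_of_mem_pathEdges he₁ (Sym2.mem_mk_left a b))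
      (mem_of_mem_pathEdges he₂ (Sym2.mem_mk_left a b))

lemma length_flatMap_pathEdges_add_length :
    ∀ {Ps : List (List V)}, (∀ l ∈ Ps, l ≠ []) →
      (Ps.flatMap pathEdges).length + Ps.length = Ps.flatten.length
  | [], _ => rfl
  | l :: Ps, h => by
    have ih := length_flatMap_pathEdges_add_length fun m hm => h m (List.mem_cons_of_mem l hm)
    have hl := List.length_pos_iff.2 (h l List.mem_cons_self)
    simp only [List.flatMap_cons, List.flatten_cons, List.length_append, List.length_cons,
      length_pathEdges]
    omega

/-- The energy dissipated by the potential `x` in the cone over the path `l`. -/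
def pathEnergy (x : V → ℝ) (l : List V) : ℝ :=
  (l.map fun v => x v ^ 2).sum + ((pathEdges l).map (sqDiff x)).sum

@[simp]
lemma pathEnergy_singleton (x : V → ℝ) (a : V) : pathEnergy x [a] = x a ^ 2 := by
  simp [pathEnergy]

@[simp]
lemma pathEnergy_cons_cons (x : V → ℝ) (a b : V) (l : List V) :
    pathEnergy x (a :: b :: l) = x a ^ 2 + (x a - x b) ^ 2 + pathEnergy x (b :: l) := by
  simp only [pathEnergy, List.map_cons, List.sum_cons, pathEdges_cons_cons, sqDiff_mk]
  ring

lemma pathEnergy_append_singleton (x : V → ℝ) (b : V) : ∀ (l : List V) (h : l ≠ []),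
    pathEnergy x (l ++ [b]) = pathEnergy x l + (x (l.getLast h) - x b) ^ 2 + x b ^ 2
  | [a], _ => by simp
  | a :: c :: l, _ => by
    have ih := pathEnergy_append_singleton x b (c :: l) (List.cons_ne_nil c l)
    simp only [List.cons_append, pathEnergy_cons_cons, List.getLast_cons_cons] at ih ⊢
    rw [ih]
    ring

lemma sum_pathEnergy_eq (x : V → ℝ) (Ps : List (List V)) :
    (Ps.map (pathEnergy x)).sum =
      (Ps.flatten.map fun v => x v ^ 2).sum + ((Ps.flatMap pathEdges).map (sqDiff x)).sum := by
  induction Ps with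
  | nil => simp
  | cons l Ps ih =>
    simp only [List.map_cons, List.sum_cons, ih, pathEnergy, List.flatten_cons,
      List.flatMap_cons, List.map_append, List.sum_append]
    ring

lemma sum_pathEnergy_le_energy [Fintype V] {S : Finset (Sym2 V)}
    {Ps : List (List V)} (hPs : Ps.flatten.Nodup) (hS : ∀ e ∈ Ps.flatMap pathEdges, e ∈ S)
    (x : V → ℝ) : (Ps.map (pathEnergy x)).sum ≤ energy S x := by
  classical
  rw [sum_pathEnergy_eq, ← List.sum_toFinset _ hPs,
    ← List.sum_toFinset _ (nodup_flatMap_pathEdges hPs)]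
  exact add_le_add
    (Finset.sum_le_sum_of_subset_of_nonneg (Finset.subset_univ _) fun _ _ _ => sq_nonneg _)
    (Finset.sum_le_sum_of_subset_of_nonneg (fun e he => hS e (List.mem_toFinset.1 he))
      fun _ _ _ => sqDiff_nonneg _ _)

end PathEdges

section PathBounds

variable {V : Type*}

-- Conductances `p` and `q` in series have resistance `1 / p + 1 / q`.
lemma sq_sub_le_inv_add_inv_mul {p q : ℝ} (hp : 0 < p) (hq : 0 < q) (s t : ℝ) :
    (s - t) ^ 2 ≤ (p⁻¹ + q⁻¹) * (p * s ^ 2 + q * t ^ 2) := by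
  have hgap : (p⁻¹ + q⁻¹) * (p * s ^ 2 + q * t ^ 2) - (s - t) ^ 2 =
      (p * s + q * t) ^ 2 / (p * q) := by
    field_simp
    ring
  have : 0 ≤ (p * s + q * t) ^ 2 / (p * q) := by positivity
  linarith

lemma fib_two_mul_succ (k : ℕ) :
    Nat.fib (2 * (k + 1) + 1) = Nat.fib (2 * k + 1) + Nat.fib (2 * k + 2) ∧
    Nat.fib (2 * (k + 1) + 2) = Nat.fib (2 * k + 1) + 2 * Nat.fib (2 * k + 2) := by
  have h₁ := Nat.fib_add_two (n := 2 * k + 1)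
  have h₂ := Nat.fib_add_two (n := 2 * k + 2)
  exact ⟨h₁, by rw [mul_add, h₂, h₁]; ring⟩

lemma fib_mul_sq_head_le_pathEnergy (x : V → ℝ) : ∀ (a : V) (l : List V),
    (Nat.fib (2 * l.length + 2) : ℝ) * x a ^ 2 ≤
      Nat.fib (2 * l.length + 1) * pathEnergy x (a :: l)
  | a, [] => by simp
  | a, b :: l => by
    have ih := fib_mul_sq_head_le_pathEnergy x b l
    obtain ⟨hodd, heven⟩ := fib_two_mul_succ l.length
    rw [List.length_cons, hodd, heven, pathEnergy_cons_cons]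
    have hq : (0 : ℝ) < (Nat.fib (2 * l.length + 1) : ℕ) := by simp
    push_cast
    set p := ((Nat.fib (2 * l.length + 2) : ℕ) : ℝ)
    set q := ((Nat.fib (2 * l.length + 1) : ℕ) : ℝ)
    have hp : 0 ≤ p := Nat.cast_nonneg _
    have hseries : p * q * x a ^ 2 ≤ (q + p) * (q * (x a - x b) ^ 2 + p * x b ^ 2) := by
      linarith [sq_nonneg (q * x a - (q + p) * x b)]
    have htail : p * x a ^ 2 ≤ (q + p) * ((x a - x b) ^ 2 + pathEnergy x (b :: l)) := by
      refine le_of_mul_le_mul_left ?_ hq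
      linarith [mul_le_mul_of_nonneg_left ih (add_pos_of_pos_of_nonneg hq hp).le]
    linarith

lemma two_mul_sq_le_pathEnergy (x : V → ℝ) (a u b : V) :
    2 * x u ^ 2 ≤ pathEnergy x [a, u, b] := by
  simp only [pathEnergy_cons_cons, pathEnergy_singleton]
  linarith [sq_nonneg (x u - 2 * x a), sq_nonneg (x u - 2 * x b)]

lemma sq_sub_le_pathEnergy_of_four (x : V → ℝ) (v w u w' : V) :
    (x u - x v) ^ 2 ≤ 7 / 6 * pathEnergy x [v, w, u, w'] := by
  simp only [pathEnergy_cons_cons, pathEnergy_singleton]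
  nlinarith [sq_nonneg (x u - 2 * x w'), sq_nonneg (x v + x u), sq_nonneg (2 * x w - x u - x v)]

lemma sq_le_sq_add_mul_sq_add_sq (s t : ℝ) :
    s ^ 2 ≤ t ^ 2 + (√5 - 1) / 2 * (s ^ 2 + (s - t) ^ 2) := by
  have hsq : √5 ^ 2 = 5 := Real.sq_sqrt (by norm_num)
  have hgap : t ^ 2 + (√5 - 1) / 2 * (s ^ 2 + (s - t) ^ 2) - s ^ 2 =
      (√5 + 1) / 2 * (t - (3 - √5) / 2 * s) ^ 2 := by
    linear_combination (-(√5 - 5) / 8 * s ^ 2 - s * t / 2) * hsq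
  have : 0 ≤ (√5 + 1) / 2 * (t - (3 - √5) / 2 * s) ^ 2 := by positivity
  linarith

-- The constant `√5 - 1` is the fixed point of the recursion that bounds the resistance between
-- the ends of a path as the path grows by one vertex at each end.
lemma sq_head_sub_getLast_le_pathEnergy (x : V → ℝ) (l : List V) (hl : l ≠ []) :
    (x (l.head hl) - x (l.getLast hl)) ^ 2 ≤ (√5 - 1) * pathEnergy x l := by
  have hlb : 2 < √5 := Real.lt_sqrt_of_sq_lt (by norm_num)
  induction l using List.bidirectionalRec with
  | nil => contradiction
  | singleton a =>
    simpa using mul_nonneg (by linarith : 0 ≤ √5 - 1) (sq_nonneg (x a))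
  | cons_append a l b ih =>
    rcases eq_or_ne l [] with rfl | hne
    · simp only [List.nil_append, List.head_cons, List.getLast_cons_cons, List.getLast_singleton,
        pathEnergy_cons_cons, pathEnergy_singleton]
      nlinarith [sq_nonneg (x a), sq_nonneg (x b), sq_nonneg (x a - x b)]
    · obtain ⟨c, m, rfl⟩ := List.exists_cons_of_ne_nil hne
      have hends := ih hne
      have hpath : pathEnergy x (a :: c :: m ++ [b]) = x a ^ 2 + (x a - x c) ^ 2 +
          pathEnergy x (c :: m) + (x ((c :: m).getLast hne) - x b) ^ 2 + x b ^ 2 := by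
        rw [List.cons_append, List.cons_append, pathEnergy_cons_cons, ← List.cons_append,
          pathEnergy_append_singleton x b _ hne]
        ring
      simp only [← List.cons_append, List.getLast_append_singleton, hpath]
      simp only [List.cons_append, List.head_cons] at hends ⊢
      set d := x ((c :: m).getLast hne)
      have hmiddle : (x a - x b) ^ 2 + (x a - x b - (x c - d)) ^ 2 ≤
          2 * (x a ^ 2 + (x a - x c) ^ 2 + (d - x b) ^ 2 + x b ^ 2) := by
        linarith [sq_nonneg (x a + x b), sq_nonneg (x a - x c - (d - x b))]
      have hgrow := sq_le_sq_add_mul_sq_add_sq (x a - x b) (x c - d)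
      linarith [mul_le_mul_of_nonneg_left hmiddle (by linarith : 0 ≤ √5 - 1)]

end PathBounds

section PathDeterminants

variable {V : Type*} [Fintype V]

lemma sq_sub_le_inv_add_inv_mul_energy {S : Finset (Sym2 V)} {l₁ l₂ : List V}
    (hnodup : (l₁ ++ l₂).Nodup) (h₁ : ∀ e ∈ pathEdges l₁, e ∈ S) (h₂ : ∀ e ∈ pathEdges l₂, e ∈ S)
    {p q : ℝ} (hp : 0 < p) (hq : 0 < q) {x : V → ℝ} {u v : V}
    (hu : p * x u ^ 2 ≤ pathEnergy x l₁) (hv : q * x v ^ 2 ≤ pathEnergy x l₂) :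
    (x u - x v) ^ 2 ≤ (p⁻¹ + q⁻¹) * energy S x := by
  have hpaths := sum_pathEnergy_le_energy (S := S) (Ps := [l₁, l₂]) (by simpa using hnodup)
    (by simpa [or_imp, forall_and] using ⟨h₁, h₂⟩) x
  simp only [List.map_cons, List.map_nil, List.sum_cons, List.sum_nil, add_zero] at hpaths
  refine (sq_sub_le_inv_add_inv_mul hp hq (x u) (x v)).trans ?_
  gcongr
  linarith

variable [DecidableEq V]

lemma det_coneLap_path_union_le (S : Finset (Sym2 V)) : ∀ (a : V) (l : List V), (a :: l).Nodup →
    (coneLap ((pathEdges (a :: l)).toFinset ∪ S)).det ≤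
      Nat.fib (2 * l.length + 2) * (coneLap S).det
  | a, [], _ => by simp
  | a, b :: l, hnodup => by
    have ih := det_coneLap_path_union_le S b l hnodup.of_cons
    have hp : (0 : ℝ) < (Nat.fib (2 * l.length + 2) : ℕ) := by simp
    have hq : (0 : ℝ) < (Nat.fib (2 * l.length + 1) : ℕ) := by simp
    have hhead (x : V → ℝ) := fib_mul_sq_head_le_pathEnergy x b l
    rw [List.length_cons, (fib_two_mul_succ l.length).2, pathEdges_cons_cons,
      List.toFinset_cons, Finset.insert_union]
    push_cast
    set p := ((Nat.fib (2 * l.length + 2) : ℕ) : ℝ)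
    set q := ((Nat.fib (2 * l.length + 1) : ℕ) : ℝ)
    set T := (pathEdges (b :: l)).toFinset ∪ S
    have hresistance (x : V → ℝ) : (x a - x b) ^ 2 ≤ (1⁻¹ + (p / q)⁻¹) * energy T x := by
      refine sq_sub_le_inv_add_inv_mul_energy (l₁ := [a]) (l₂ := b :: l) hnodup (by simp)
        (fun e he => Finset.mem_union_left S (List.mem_toFinset.2 he)) one_pos (div_pos hp hq)
        (by simp) ?_
      rw [div_mul_eq_mul_div, div_le_iff₀ hq, mul_comm (pathEnergy _ _)]
      exact hhead x
    calc (coneLap (insert s(a, b) T)).det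
        ≤ (1 + (1⁻¹ + (p / q)⁻¹)) * (coneLap T).det :=
          det_coneLap_insert_le T (by positivity) hresistance
      _ ≤ (1 + (1⁻¹ + (p / q)⁻¹)) * (p * (coneLap S).det) := by gcongr
      _ = (q + 2 * p) * (coneLap S).det := by
        field_simp
        ring

lemma det_coneLap_flatMap_pathEdges_le {Ps : List (List V)} (hne : ∀ l ∈ Ps, l ≠ [])
    (hnodup : ∀ l ∈ Ps, l.Nodup) :
    (coneLap (Ps.flatMap pathEdges).toFinset).det ≤
      (Ps.map fun l => (Nat.fib (2 * l.length) : ℝ)).prod := by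
  induction Ps with
  | nil => simp [coneLap]
  | cons m Ps ih =>
    obtain ⟨a, l, rfl⟩ := List.exists_cons_of_ne_nil (hne m List.mem_cons_self)
    rw [List.flatMap_cons, List.toFinset_append, List.map_cons, List.prod_cons]
    refine (det_coneLap_path_union_le _ a l (hnodup _ List.mem_cons_self)).trans ?_
    exact mul_le_mul_of_nonneg_left (ih (fun l hl => hne l (List.mem_cons_of_mem _ hl))
      fun l hl => hnodup l (List.mem_cons_of_mem _ hl)) (Nat.cast_nonneg _)

-- The potential with consecutive values `F₁, F₃, F₅, …` along the path is harmonic except at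
-- the end `a`, so it makes the Cauchy–Schwarz bound `det_mul_energy_insert_le` sharp.
lemma exists_energy_pathEdges_eq_fib_mul_fib : ∀ (a : V) (l : List V), (a :: l).Nodup →
    ∃ x : V → ℝ, x a = Nat.fib (2 * l.length + 1) ∧ (∀ v ∉ a :: l, x v = 0) ∧
      energy (pathEdges (a :: l)).toFinset x =
        Nat.fib (2 * l.length + 1) * Nat.fib (2 * l.length + 2)
  | a, [], _ => ⟨Pi.single a 1, by simp, by simp_all, by simp [energy, Pi.single_apply]⟩
  | a, b :: l, hnodup => by
    obtain ⟨x, hxb, hx, henergy⟩ := exists_energy_pathEdges_eq_fib_mul_fib b l hnodup.of_cons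
    have ha : a ∉ b :: l := (List.nodup_cons.1 hnodup).1
    have hab : b ≠ a := fun h => ha (h ▸ List.mem_cons_self)
    obtain ⟨hodd, heven⟩ := fib_two_mul_succ l.length
    refine ⟨Function.update x a (Nat.fib (2 * (l.length + 1) + 1)), by simp, fun v hv => ?_, ?_⟩
    · rw [List.mem_cons, not_or] at hv
      rw [Function.update_of_ne hv.1, hx v hv.2]
    · rw [pathEdges_cons_cons, List.toFinset_cons, energy_insert (by
        simpa using fun he => notMem_of_mem_pathEdges ha he (Sym2.mem_mk_left a b)),
        energy_update (by simpa using fun e he => notMem_of_mem_pathEdges ha he) (hx a ha),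
        henergy, sqDiff_mk, Function.update_self, Function.update_of_ne hab, hxb,
        List.length_cons, hodd, heven]
      push_cast
      ring

lemma fib_le_det_coneLap_pathEdges : ∀ (a : V) (l : List V), (a :: l).Nodup →
    (Nat.fib (2 * l.length + 2) : ℝ) ≤ (coneLap (pathEdges (a :: l)).toFinset).det
  | a, [], _ => by simp [coneLap]
  | a, b :: l, hnodup => by
    have ih := fib_le_det_coneLap_pathEdges b l hnodup.of_cons
    obtain ⟨x, hxb, hx, henergy⟩ := exists_energy_pathEdges_eq_fib_mul_fib b l hnodup.of_cons
    have ha : a ∉ b :: l := (List.nodup_cons.1 hnodup).1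
    have hba : b ≠ a := fun h => ha (h ▸ List.mem_cons_self)
    have hnew : s(a, b) ∉ (pathEdges (b :: l)).toFinset := by
      simpa using fun he => notMem_of_mem_pathEdges ha he (Sym2.mem_mk_left a b)
    have hp : (0 : ℝ) < (Nat.fib (2 * l.length + 2) : ℕ) := by simp
    rw [pathEdges_cons_cons, List.toFinset_cons, List.length_cons,
      (fib_two_mul_succ l.length).2]
    push_cast
    set p := ((Nat.fib (2 * l.length + 2) : ℕ) : ℝ)
    set q := ((Nat.fib (2 * l.length + 1) : ℕ) : ℝ)
    set T := (pathEdges (b :: l)).toFinset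
    have henergy_update : energy T (Function.update x a (-p)) = p * (p + q) := by
      rw [energy_update (by simpa [T] using fun e he => notMem_of_mem_pathEdges ha he) (hx a ha),
        henergy]
      ring
    have hdet := det_mul_energy_insert_le hnew (Function.update x a (-p))
    rw [energy_insert hnew, henergy_update, sqDiff_mk, Function.update_self,
      Function.update_of_ne hba, hxb] at hdet
    have hpq : 0 < p * (p + q) := by positivity
    refine le_of_mul_le_mul_right ?_ hpq
    calc (q + 2 * p) * (p * (p + q)) = p * (p * (p + q) + (-p - q) ^ 2) := by ring
      _ ≤ (coneLap T).det * (p * (p + q) + (-p - q) ^ 2) := by gcongr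
      _ ≤ (coneLap (insert s(a, b) T)).det * (p * (p + q)) := hdet

end PathDeterminants

section ExtraEdges

variable {V : Type*}

/-- The vertex `u` has at least two neighbors along the edges in `S`. -/
def HasTwoNeighbors (S : Finset (Sym2 V)) (u : V) : Prop :=
  ∃ w₁ w₂, w₁ ≠ w₂ ∧ s(u, w₁) ∈ S ∧ s(u, w₂) ∈ S

lemma HasTwoNeighbors.mono {S T : Finset (Sym2 V)} {u : V} (h : HasTwoNeighbors S u)
    (hST : S ⊆ T) : HasTwoNeighbors T u :=
  let ⟨w₁, w₂, hw, h₁, h₂⟩ := h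
  ⟨w₁, w₂, hw, hST h₁, hST h₂⟩

variable [Fintype V] {S : Finset (Sym2 V)} {u v : V}

lemma HasTwoNeighbors.sq_sub_le (hu : HasTwoNeighbors S u) (hS : ∀ e ∈ S, ¬e.IsDiag)
    (huv : u ≠ v) (hnew : s(u, v) ∉ S) (x : V → ℝ) :
    (x u - x v) ^ 2 ≤ 3 / 2 * energy S x := by
  obtain ⟨w₁, w₂, hw, h₁, h₂⟩ := hu
  have hu₁ : u ≠ w₁ := hS _ h₁
  have hu₂ : u ≠ w₂ := hS _ h₂
  have hv₁ : v ≠ w₁ := fun h => hnew (h ▸ h₁)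
  have hv₂ : v ≠ w₂ := fun h => hnew (h ▸ h₂)
  have hseries := sq_sub_le_inv_add_inv_mul_energy (S := S) (l₁ := [w₁, u, w₂]) (l₂ := [v])
    (by grind) (by simp [h₂, Sym2.eq_swap (a := w₁), h₁]) (by simp) two_pos one_pos
    (two_mul_sq_le_pathEnergy x w₁ u w₂) (v := v) (by simp)
  exact hseries.trans_eq (by norm_num)

lemma HasTwoNeighbors.sq_sub_le_of_mem (hu : HasTwoNeighbors S u) (hS : ∀ e ∈ S, ¬e.IsDiag)
    (huv : u ≠ v) (hnew : s(u, v) ∉ S) {w : V} (hvw : s(v, w) ∈ S) (x : V → ℝ) :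
    (x u - x v) ^ 2 ≤ 7 / 6 * energy S x := by
  obtain ⟨w₁, w₂, hw, h₁, h₂⟩ := hu
  have hu₁ : u ≠ w₁ := hS _ h₁
  have hu₂ : u ≠ w₂ := hS _ h₂
  have hv₁ : v ≠ w₁ := fun h => hnew (h ▸ h₁)
  have hv₂ : v ≠ w₂ := fun h => hnew (h ▸ h₂)
  have hvw' : v ≠ w := hS _ hvw
  have huw : u ≠ w := fun h => hnew (by rwa [h, Sym2.eq_swap])
  by_cases hshared : w = w₁ ∨ w = w₂
  · wlog hww₁ : w = w₁ generalizing w₁ w₂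
    · exact this w₂ w₁ hw.symm h₂ h₁ hu₂ hu₁ hv₂ hv₁ hshared.symm (hshared.resolve_left hww₁)
    subst hww₁
    have hpath := sum_pathEnergy_le_energy (S := S) (Ps := [[v, w, u, w₂]]) (by grind)
      (by simp [hvw, h₂, Sym2.eq_swap (a := w), h₁]) x
    simp only [List.map_cons, List.map_nil, List.sum_cons, List.sum_nil, add_zero] at hpath
    linarith [sq_sub_le_pathEnergy_of_four x v w u w₂]
  · have hvw_energy : 3 / 2 * x v ^ 2 ≤ pathEnergy x [v, w] := by
      rw [pathEnergy_cons_cons, pathEnergy_singleton]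
      linarith [sq_nonneg (x v - 2 * x w)]
    have hseries := sq_sub_le_inv_add_inv_mul_energy (S := S) (l₁ := [w₁, u, w₂]) (l₂ := [v, w])
      (by grind) (by simp [h₂, Sym2.eq_swap (a := w₁), h₁]) (by simp [hvw]) two_pos
      (by norm_num) (two_mul_sq_le_pathEnergy x w₁ u w₂) hvw_energy
    exact hseries.trans_eq (by norm_num)

lemma sq_sub_le_of_head_getLast {l : List V} (hl : l ≠ []) (hnodup : l.Nodup)
    (hlS : ∀ e ∈ pathEdges l, e ∈ S) (x : V → ℝ) :
    (x (l.head hl) - x (l.getLast hl)) ^ 2 ≤ (√5 - 1) * energy S x := by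
  have hpath := sum_pathEnergy_le_energy (S := S) (Ps := [l]) (by simpa) (by simpa) x
  simp only [List.map_cons, List.map_nil, List.sum_cons, List.sum_nil, add_zero] at hpath
  have hsqrt : 1 ≤ √5 := Real.one_le_sqrt.2 (by norm_num)
  exact (sq_head_sub_getLast_le_pathEnergy x l hl).trans
    (mul_le_mul_of_nonneg_left hpath (sub_nonneg.2 hsqrt))

variable [DecidableEq V]

/-- The vertices that lie on no edge of `S`. -/
def isolated (S : Finset (Sym2 V)) : Finset V := {v | ∀ e ∈ S, v ∉ e}

lemma mem_isolated : v ∈ isolated S ↔ ∀ e ∈ S, v ∉ e := by simp [isolated]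

lemma isolated_anti {T : Finset (Sym2 V)} (hST : S ⊆ T) : isolated T ⊆ isolated S :=
  fun _ hv => mem_isolated.2 fun e he => mem_isolated.1 hv e (hST he)

/-- The determinant of `coneLap S`, with a bonus factor `√5 / 2` for every isolated vertex. The
bonus is chosen so that joining an isolated vertex to a vertex with two neighbors, which may
multiply the determinant by `5 / 2`, still multiplies this quantity by at most `√5`. -/
noncomputable def bonusDet (S : Finset (Sym2 V)) : ℝ :=
  (√5 / 2) ^ (isolated S).card * (coneLap S).det

lemma one_le_sqrt_five_div_two : 1 ≤ √5 / 2 := by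
  rw [le_div_iff₀ two_pos, one_mul]
  exact Real.le_sqrt_of_sq_le (by norm_num)

lemma det_coneLap_le_bonusDet (S : Finset (Sym2 V)) : (coneLap S).det ≤ bonusDet S :=
  le_mul_of_one_le_left (coneLap_det_pos S).le (one_le_pow₀ one_le_sqrt_five_div_two)

lemma bonusDet_insert_le_of_sq_sub_le {C : ℝ} (hC : 0 ≤ C) (hC5 : 1 + C ≤ √5)
    (h : ∀ x : V → ℝ, (x u - x v) ^ 2 ≤ C * energy S x) :
    bonusDet (insert s(u, v) S) ≤ √5 * bonusDet S := by
  have hcard := Finset.card_le_card (isolated_anti (Finset.subset_insert s(u, v) S))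
  calc bonusDet (insert s(u, v) S)
      ≤ (√5 / 2) ^ (isolated S).card * ((1 + C) * (coneLap S).det) :=
        mul_le_mul (pow_le_pow_right₀ one_le_sqrt_five_div_two hcard)
          (det_coneLap_insert_le S hC h) (coneLap_det_pos _).le (by positivity)
    _ ≤ (√5 / 2) ^ (isolated S).card * (√5 * (coneLap S).det) := by
        gcongr
        exact (coneLap_det_pos S).le
    _ = √5 * bonusDet S := by
        rw [bonusDet]
        ring

lemma bonusDet_insert_le_of_isolated (hv : v ∈ isolated S)
    (h : ∀ x : V → ℝ, (x u - x v) ^ 2 ≤ 3 / 2 * energy S x) :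
    bonusDet (insert s(u, v) S) ≤ √5 * bonusDet S := by
  have hcard : (isolated (insert s(u, v) S)).card + 1 ≤ (isolated S).card := by
    refine Finset.card_lt_card ((Finset.ssubset_iff_of_subset
      (isolated_anti (Finset.subset_insert _ S))).2 ⟨v, hv, fun hv' => ?_⟩)
    exact mem_isolated.1 hv' _ (Finset.mem_insert_self _ S) (Sym2.mem_mk_right u v)
  have hsqrt : √5 * √5 = 5 := Real.mul_self_sqrt (by norm_num)
  calc bonusDet (insert s(u, v) S)
      ≤ (√5 / 2) ^ (isolated (insert s(u, v) S)).card * ((1 + 3 / 2) * (coneLap S).det) :=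
        mul_le_mul_of_nonneg_left (det_coneLap_insert_le S (by norm_num) h) (by positivity)
    _ = √5 * ((√5 / 2) ^ ((isolated (insert s(u, v) S)).card + 1) * (coneLap S).det) := by
        linear_combination (-(√5 / 2) ^ (isolated (insert s(u, v) S)).card *
          (coneLap S).det / 2) * hsqrt
    _ ≤ √5 * bonusDet S := by
        rw [bonusDet]
        gcongr
        · exact (coneLap_det_pos S).le
        · exact one_le_sqrt_five_div_two

lemma HasTwoNeighbors.bonusDet_insert_le (hu : HasTwoNeighbors S u) (hS : ∀ e ∈ S, ¬e.IsDiag)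
    (huv : u ≠ v) (hnew : s(u, v) ∉ S) : bonusDet (insert s(u, v) S) ≤ √5 * bonusDet S := by
  by_cases hv : v ∈ isolated S
  · exact bonusDet_insert_le_of_isolated hv (hu.sq_sub_le hS huv hnew)
  · simp only [mem_isolated, not_forall, not_not] at hv
    obtain ⟨_, hvw, w, rfl⟩ := hv
    exact bonusDet_insert_le_of_sq_sub_le (by norm_num)
      (Real.le_sqrt_of_sq_le (by norm_num)) (hu.sq_sub_le_of_mem hS huv hnew hvw)

lemma bonusDet_insert_head_getLast_le {l : List V} (hl : l ≠ []) (hnodup : l.Nodup)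
    (hlS : ∀ e ∈ pathEdges l, e ∈ S) :
    bonusDet (insert s(l.head hl, l.getLast hl) S) ≤ √5 * bonusDet S :=
  bonusDet_insert_le_of_sq_sub_le (sub_nonneg.2 (Real.one_le_sqrt.2 (by norm_num))) (by linarith)
    (sq_sub_le_of_head_getLast hl hnodup hlS)

lemma bonusDet_le_sqrt_five_pow_mul {P Q : Finset (Sym2 V)} (hQP : Q ⊆ P)
    (h : ∀ e ∈ P \ Q, ∀ S, Q ⊆ S → S ⊆ P → e ∉ S → bonusDet (insert e S) ≤ √5 * bonusDet S) :
    bonusDet P ≤ √5 ^ (P \ Q).card * bonusDet Q := by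
  suffices hT : ∀ T ⊆ P \ Q, bonusDet (T ∪ Q) ≤ √5 ^ T.card * bonusDet Q by
    simpa [Finset.sdiff_union_of_subset hQP] using hT _ subset_rfl
  intro T
  induction T using Finset.induction_on with
  | empty => simp
  | insert e T he ih =>
    intro hT
    obtain ⟨heP, hTP⟩ := Finset.insert_subset_iff.1 hT
    have heQ := (Finset.mem_sdiff.1 heP).2
    rw [Finset.insert_union, Finset.card_insert_of_notMem he, pow_succ', mul_assoc]
    refine (h e heP (T ∪ Q) Finset.subset_union_right
      (Finset.union_subset (hTP.trans Finset.sdiff_subset) hQP) (by simp [he, heQ])).trans ?_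
    gcongr
    exact ih hTP

end ExtraEdges

section PathEnds

variable {V : Type*}

lemma isChain_mem_iff_forall_mem_pathEdges {S : Finset (Sym2 V)} : ∀ {l : List V},
    l.IsChain (fun a b => s(a, b) ∈ S) ↔ ∀ e ∈ pathEdges l, e ∈ S
  | [] | [_] => by simp [pathEdges]
  | a :: b :: l => by
    rw [List.isChain_cons_cons, isChain_mem_iff_forall_mem_pathEdges, pathEdges_cons_cons,
      List.forall_mem_cons]

lemma exists_mem_pathEdges_of_mem {l : List V} {v : V} (hv : v ∈ l) (hl : l.length ≠ 1) :
    ∃ e ∈ pathEdges l, v ∈ e := by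
  obtain ⟨i, hi, rfl⟩ := List.mem_iff_getElem.1 hv
  rcases Nat.lt_or_ge (i + 1) l.length with hi' | hi'
  · exact ⟨_, mem_pathEdges.2 ⟨i, hi', rfl⟩, Sym2.mem_mk_left _ _⟩
  · obtain ⟨j, rfl⟩ := Nat.exists_eq_add_of_lt (by omega : 0 < i)
    simp only [zero_add]
    exact ⟨_, mem_pathEdges.2 ⟨j, by omega, rfl⟩, by simp⟩

/-- The vertex `u` is the first or the last vertex of the path `l`. -/
def IsPathEnd (l : List V) (u : V) : Prop := l.head? = some u ∨ l.getLast? = some u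

lemma isPathEnd_reverse {l : List V} {u : V} : IsPathEnd l.reverse u ↔ IsPathEnd l u := by
  rw [IsPathEnd, List.head?_reverse, List.getLast?_reverse, or_comm, IsPathEnd]

lemma isPathEnd_or_hasTwoNeighbors {S : Finset (Sym2 V)} {l : List V} (hnodup : l.Nodup)
    (hlS : ∀ e ∈ pathEdges l, e ∈ S) {u : V} (hu : u ∈ l) :
    IsPathEnd l u ∨ HasTwoNeighbors S u := by
  obtain ⟨i, hi, rfl⟩ := List.mem_iff_getElem.1 hu
  rcases i with _ | i
  · exact Or.inl (Or.inl (by rw [List.head?_eq_getElem?, List.getElem?_eq_getElem hi]))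
  · rcases Nat.lt_or_ge (i + 2) l.length with hi' | hi'
    · refine Or.inr ⟨l[i], l[i + 2], ?_, hlS _ ?_, hlS _ ?_⟩
      · exact fun h => by simpa using hnodup.getElem_inj_iff.1 h
      · exact mem_pathEdges.2 ⟨i, hi, Sym2.eq_swap⟩
      · exact mem_pathEdges.2 ⟨i + 1, hi', rfl⟩
    · refine Or.inl (Or.inr ?_)
      rw [List.getLast?_eq_getElem?, show l.length - 1 = i + 1 by omega,
        List.getElem?_eq_getElem hi]

lemma exists_perm_append_isChain_mem {S : Finset (Sym2 V)} {l₁ l₂ : List V}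
    (h₁ : l₁.IsChain fun a b => s(a, b) ∈ S) (h₂ : l₂.IsChain fun a b => s(a, b) ∈ S) {u v : V}
    (hu : IsPathEnd l₁ u) (hv : IsPathEnd l₂ v) (huv : s(u, v) ∈ S) :
    ∃ l : List V, l.Perm (l₁ ++ l₂) ∧ l.IsChain fun a b => s(a, b) ∈ S := by
  have hreverse {l : List V} (h : l.IsChain fun a b => s(a, b) ∈ S) :
      l.reverse.IsChain fun a b => s(a, b) ∈ S :=
    List.isChain_reverse.2 (h.imp fun a b hab => by rwa [Sym2.eq_swap])
  wlog hu' : l₁.getLast? = some u generalizing l₁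
  · obtain ⟨l, hl, hchain⟩ := this (hreverse h₁) (isPathEnd_reverse.2 hu)
      (by rw [List.getLast?_reverse]; exact hu.resolve_right hu')
    exact ⟨l, hl.trans ((List.reverse_perm l₁).append_right l₂), hchain⟩
  wlog hv' : l₂.head? = some v generalizing l₂
  · obtain ⟨l, hl, hchain⟩ := this (hreverse h₂) (isPathEnd_reverse.2 hv)
      (by rw [List.head?_reverse]; exact hv.resolve_left hv')
    exact ⟨l, hl.trans ((List.reverse_perm l₂).append_left l₁), hchain⟩
  exact ⟨l₁ ++ l₂, .rfl, List.isChain_append.2 ⟨h₁, h₂, by simpa [hu', hv'] using huv⟩⟩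

lemma bonusDet_insert_pathEnds_le [Fintype V] [DecidableEq V] {S : Finset (Sym2 V)} {l : List V}
    (hnodup : l.Nodup) (hlS : ∀ e ∈ pathEdges l, e ∈ S) {u v : V} (hu : IsPathEnd l u)
    (hv : IsPathEnd l v) (huv : u ≠ v) : bonusDet (insert s(u, v) S) ≤ √5 * bonusDet S := by
  have hl : l ≠ [] := by
    rintro rfl
    simp [IsPathEnd] at hu
  rw [IsPathEnd, ← List.head_eq_iff_head?_eq_some hl, ← List.getLast_eq_iff_getLast?_eq_some hl]
    at hu hv
  have hends := bonusDet_insert_head_getLast_le hl hnodup hlS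
  rcases hu with rfl | rfl <;> rcases hv with rfl | rfl
  · exact absurd rfl huv
  · exact hends
  · rwa [Sym2.eq_swap]
  · exact absurd rfl huv

end PathEnds

section PathCovers

variable {n : ℕ} {E : Finset (Sym2 (Fin n))} {Ps : List (List (Fin n))}

lemma isPathCoverOf_iff : IsPathCoverOf n E Ps ↔
    (∀ l ∈ Ps, l ≠ [] ∧ l.IsChain fun a b => s(a, b) ∈ E) ∧
      Ps.flatten.Perm (List.finRange n) := by
  have hperm : Ps.flatten.Perm (List.finRange n) ↔
      ((∀ l ∈ Ps, l.Nodup) ∧ Ps.Pairwise List.Disjoint) ∧ ∀ v, ∃ l ∈ Ps, v ∈ l := by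
    rw [← List.nodup_flatten]
    refine ⟨fun h => ⟨h.nodup_iff.2 (List.nodup_finRange n), fun v => ?_⟩, fun h => ?_⟩
    · exact List.mem_flatten.1 (h.mem_iff.2 (List.mem_finRange v))
    · exact (List.perm_ext_iff_of_nodup h.1 (List.nodup_finRange n)).2 fun v => by
        simpa using h.2 v
  rw [hperm]
  exact ⟨fun ⟨h, hdisj, hmem⟩ => ⟨fun l hl => ⟨(h l hl).1, (h l hl).2.2⟩,
    ⟨fun l hl => (h l hl).2.1, hdisj⟩, hmem⟩,
    fun ⟨h, ⟨hnodup, hdisj⟩, hmem⟩ => ⟨fun l hl => ⟨(h l hl).1, hnodup l hl, (h l hl).2⟩,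
    hdisj, hmem⟩⟩

lemma IsPathCoverOf.mono {E' : Finset (Sym2 (Fin n))} (h : IsPathCoverOf n E Ps) (hE : E ⊆ E') :
    IsPathCoverOf n E' Ps := by
  rw [isPathCoverOf_iff] at h ⊢
  exact ⟨fun l hl => ⟨(h.1 l hl).1, (h.1 l hl).2.imp fun _ _ hab => hE hab⟩, h.2⟩

lemma IsPathCoverOf.nodup_flatten (h : IsPathCoverOf n E Ps) : Ps.flatten.Nodup :=
  (isPathCoverOf_iff.1 h).2.nodup_iff.2 (List.nodup_finRange n)

lemma IsPathCoverOf.sum_length (h : IsPathCoverOf n E Ps) : (Ps.map List.length).sum = n := by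
  rw [← List.length_flatten, (isPathCoverOf_iff.1 h).2.length_eq, List.length_finRange]

lemma IsPathCoverOf.flatMap_pathEdges_subset (h : IsPathCoverOf n E Ps) :
    (Ps.flatMap pathEdges).toFinset ⊆ E := by
  intro e he
  obtain ⟨l, hl, hel⟩ := List.mem_flatMap.1 (List.mem_toFinset.1 he)
  exact isChain_mem_iff_forall_mem_pathEdges.1 (h.1 l hl).2.2 e hel

lemma IsPathCoverOf.card_pathEdges_add_length (h : IsPathCoverOf n E Ps) :
    (Ps.flatMap pathEdges).toFinset.card + Ps.length = n := by
  rw [List.toFinset_card_of_nodup (nodup_flatMap_pathEdges h.nodup_flatten),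
    length_flatMap_pathEdges_add_length fun l hl => (h.1 l hl).1, List.length_flatten,
    h.sum_length]

lemma IsPathCoverOf.card_isolated_le (h : IsPathCoverOf n E Ps) :
    (isolated (Ps.flatMap pathEdges).toFinset).card ≤ Ps.countP (·.length = 1) := by
  rw [List.countP_eq_length_filter, ← Finset.card_image_of_injective _ (List.singleton_injective)]
  refine le_trans (Finset.card_le_card fun m hm => ?_) (List.toFinset_card_le _)
  obtain ⟨v, hv, rfl⟩ := Finset.mem_image.1 hm
  obtain ⟨l, hl, hvl⟩ := h.2.2 v
  have hlength : l.length = 1 := by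
    by_contra hne
    obtain ⟨e, he, hve⟩ := exists_mem_pathEdges_of_mem hvl hne
    exact mem_isolated.1 hv e (List.mem_toFinset.2 (List.mem_flatMap.2 ⟨l, hl, he⟩)) hve
  obtain ⟨w, rfl⟩ := List.length_eq_one_iff.1 hlength
  obtain rfl := List.mem_singleton.1 hvl
  simpa using hl

lemma isPathCoverOf_singletons (E : Finset (Sym2 (Fin n))) :
    IsPathCoverOf n E ((List.finRange n).map fun v => [v]) := by
  rw [isPathCoverOf_iff]
  refine ⟨by simp, ?_⟩
  rw [← List.flatMap_def, List.flatMap_singleton']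

lemma exists_minimal_isPathCoverOf (E : Finset (Sym2 (Fin n))) :
    ∃ Ps, MinimalFor (IsPathCoverOf n E) List.length Ps :=
  exists_minimalFor_of_wellFoundedLT _ _ ⟨_, isPathCoverOf_singletons E⟩

lemma IsPathCoverOf.join {Rs : List (List (Fin n))} {l₁ l₂ l : List (Fin n)}
    (h : IsPathCoverOf n E Ps) (hPs : Ps.Perm (l₁ :: l₂ :: Rs)) (hl : l.Perm (l₁ ++ l₂))
    (hchain : l.IsChain fun a b => s(a, b) ∈ E) : IsPathCoverOf n E (l :: Rs) := by
  rw [isPathCoverOf_iff] at h ⊢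
  refine ⟨List.forall_mem_cons.2 ⟨⟨fun hnil => ?_, hchain⟩, fun m hm => h.1 m ?_⟩, ?_⟩
  · rw [hnil, List.nil_perm, List.append_eq_nil_iff] at hl
    exact (h.1 l₁ (hPs.mem_iff.2 List.mem_cons_self)).1 hl.1
  · exact hPs.mem_iff.2 (List.mem_cons_of_mem _ (List.mem_cons_of_mem _ hm))
  · refine .trans ?_ (hPs.flatten.symm.trans h.2)
    simpa using hl.append_right Rs.flatten

lemma eq_of_isPathEnd_of_minimal (hPs : MinimalFor (IsPathCoverOf n E) List.length Ps)
    {l₁ l₂ : List (Fin n)} (h₁ : l₁ ∈ Ps) (h₂ : l₂ ∈ Ps) {u v : Fin n} (hu : IsPathEnd l₁ u)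
    (hv : IsPathEnd l₂ v) (huv : s(u, v) ∈ E) : l₁ = l₂ := by
  by_contra hne
  have hcover := hPs.1
  have hperm : Ps.Perm (l₁ :: l₂ :: (Ps.erase l₁).erase l₂) :=
    (List.perm_cons_erase h₁).trans
      ((List.perm_cons_erase ((List.mem_erase_of_ne (Ne.symm hne)).2 h₂)).cons l₁)
  obtain ⟨l, hl, hchain⟩ := exists_perm_append_isChain_mem (hcover.1 l₁ h₁).2.2
    (hcover.1 l₂ h₂).2.2 hu hv huv
  have hle := hPs.le (hcover.join hperm hl hchain)
  have hlength := hperm.length_eq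
  simp only [List.length_cons] at hle hlength
  omega

lemma bonusDet_insert_le_of_minimal (hE : ∀ e ∈ E, ¬e.IsDiag)
    (hPs : MinimalFor (IsPathCoverOf n E) List.length Ps) {S : Finset (Sym2 (Fin n))}
    (hPsS : (Ps.flatMap pathEdges).toFinset ⊆ S) (hSE : S ⊆ E) {e : Sym2 (Fin n)} (he : e ∈ E)
    (heS : e ∉ S) : bonusDet (insert e S) ≤ √5 * bonusDet S := by
  induction e with
  | _ u v =>
  have hloopless : ∀ e ∈ S, ¬e.IsDiag := fun e he => hE e (hSE he)
  have huv : u ≠ v := hE _ he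
  obtain ⟨l₁, h₁, hul₁⟩ := hPs.1.2.2 u
  obtain ⟨l₂, h₂, hvl₂⟩ := hPs.1.2.2 v
  have hpathS {l : List (Fin n)} (hl : l ∈ Ps) : ∀ e ∈ pathEdges l, e ∈ S := fun e he =>
    hPsS (List.mem_toFinset.2 (List.mem_flatMap.2 ⟨l, hl, he⟩))
  have hnodup {l : List (Fin n)} (hl : l ∈ Ps) : l.Nodup := (hPs.1.1 l hl).2.1
  rcases isPathEnd_or_hasTwoNeighbors (hnodup h₁) (hpathS h₁) hul₁ with hu | hu
  · rcases isPathEnd_or_hasTwoNeighbors (hnodup h₂) (hpathS h₂) hvl₂ with hv | hv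
    · obtain rfl := eq_of_isPathEnd_of_minimal hPs h₁ h₂ hu hv he
      exact bonusDet_insert_pathEnds_le (hnodup h₁) (hpathS h₁) hu hv huv
    · rw [Sym2.eq_swap] at heS ⊢
      exact hv.bonusDet_insert_le hloopless huv.symm heS
  · exact hu.bonusDet_insert_le hloopless huv heS

end PathCovers

section PathFactor

/-- The contribution of a path on `k` vertices to the bound on `bonusDet`: the determinant
`F_{2k}` of its cone, a factor `√5` for one extra edge, and the bonus of an isolated vertex. -/
noncomputable def pathFactor (k : ℕ) : ℝ :=
  √5 * Nat.fib (2 * k) * if k = 1 then √5 / 2 else 1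

lemma pathFactor_nonneg (k : ℕ) : 0 ≤ pathFactor k := by
  rw [pathFactor]
  split_ifs <;> positivity

lemma prod_pathFactor (ks : List ℕ) : (ks.map pathFactor).prod =
    √5 ^ ks.length *
      ((√5 / 2) ^ ks.countP (· = 1) * (ks.map fun k => (Nat.fib (2 * k) : ℝ)).prod) := by
  induction ks with
  | nil => simp
  | cons k ks ih =>
    simp only [List.map_cons, List.prod_cons, ih, List.length_cons, List.countP_cons, pathFactor,
      decide_eq_true_eq]
    split_ifs <;> ring

-- The exponent `2 * k + 4`, instead of the `2 * k` of Binet's formula, leaves room for the bonus of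
-- a single vertex.
lemma pathFactor_le_pow_sub_pow {k : ℕ} (hk : k ≠ 0) :
    pathFactor k ≤ φ ^ (2 * k) - ψ ^ (2 * k + 4) := by
  rcases eq_or_ne k 1 with rfl | hk1
  · have hsqrt : √5 * √5 = 5 := Real.mul_self_sqrt (by norm_num)
    have hφ : φ = 1 - ψ := eq_sub_of_add_eq Real.goldenRatio_add_goldenConj
    have hψ6 : ψ ^ 6 = 8 * ψ + 5 := by
      linear_combination (ψ ^ 4 + ψ ^ 3 + 2 * ψ ^ 2 + 3 * ψ + 5) * Real.goldenConj_sq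
    have hψ : 18 * ψ ≤ -11 := by
      have : (20 : ℝ) / 9 ≤ √5 := Real.le_sqrt_of_sq_le (by norm_num)
      rw [Real.goldenConj]
      linarith
    calc pathFactor 1 = 5 / 2 := by
          rw [pathFactor, if_pos rfl, mul_one, Nat.fib_two, Nat.cast_one]
          linarith
      _ ≤ (φ + 1) - (8 * ψ + 5) := by linarith
      _ = φ ^ (2 * 1) - ψ ^ (2 * 1 + 4) := by rw [← hψ6, ← Real.goldenRatio_sq]
  · have hbinet : √5 * Nat.fib (2 * k) = φ ^ (2 * k) - ψ ^ (2 * k) := by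
      rw [Real.coe_fib_eq]
      field_simp
    have hψ : ψ ^ 2 ≤ 1 := by
      linarith [Real.goldenConj_sq, Real.goldenConj_neg]
    have hψpow : ψ ^ (2 * k + 4) ≤ ψ ^ (2 * k) := by
      rw [show 2 * k + 4 = 2 * (k + 2) by ring, pow_mul, pow_mul]
      exact pow_le_pow_of_le_one (sq_nonneg ψ) hψ (Nat.le_add_right k 2)
    rw [pathFactor, if_neg hk1, mul_one, hbinet]
    linarith

lemma pathFactor_le_exp {k : ℕ} (hk : k ≠ 0) :
    pathFactor k ≤ exp (2 * log φ * k - exp (-(4 * log φ * (k + 1)))) := by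
  have hφpow : exp (2 * log φ * k) = φ ^ (2 * k) := by
    rw [← Real.rpow_natCast, Real.rpow_def_of_pos Real.goldenRatio_pos]
    push_cast
    ring_nf
  have hψpow : exp (-(4 * log φ * (k + 1))) = ψ ^ (4 * (k + 1)) := by
    have heven : Even (4 * (k + 1)) := (by decide : Even 4).mul_right _
    rw [← heven.neg_pow, ← Real.inv_goldenRatio, ← Real.rpow_natCast,
      Real.rpow_def_of_pos (inv_pos.2 Real.goldenRatio_pos), Real.log_inv]
    push_cast
    ring_nf
  have hφψ : φ ^ (2 * k) * ψ ^ (4 * (k + 1)) = ψ ^ (2 * k + 4) := by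
    rw [show 4 * (k + 1) = 2 * k + (2 * k + 4) by ring, pow_add ψ (2 * k), ← mul_assoc,
      ← mul_pow, Real.goldenRatio_mul_goldenConj, (even_two_mul k).neg_one_pow, one_mul]
  calc pathFactor k ≤ φ ^ (2 * k) - ψ ^ (2 * k + 4) := pathFactor_le_pow_sub_pow hk
    _ = φ ^ (2 * k) * (1 - ψ ^ (4 * (k + 1))) := by rw [mul_sub, hφψ, mul_one]
    _ ≤ φ ^ (2 * k) * exp (-ψ ^ (4 * (k + 1))) := by
      gcongr
      exact Real.one_sub_le_exp_neg _
    _ = exp (2 * log φ * k - exp (-(4 * log φ * (k + 1)))) := by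
      rw [sub_eq_add_neg, Real.exp_add, hφpow, hψpow]

lemma prod_pathFactor_le_exp {ks : List ℕ} (hks : ∀ k ∈ ks, k ≠ 0) :
    (ks.map pathFactor).prod ≤
      exp (2 * log φ * ks.sum - (ks.map fun k : ℕ => exp (-(4 * log φ * (k + 1)))).sum) := by
  induction ks with
  | nil => simp
  | cons k ks ih =>
    rw [List.forall_mem_cons] at hks
    simp only [List.map_cons, List.prod_cons, List.sum_cons]
    have hnonneg : 0 ≤ (ks.map pathFactor).prod := List.prod_nonneg fun _ hr => by
      obtain ⟨j, -, rfl⟩ := List.mem_map.1 hr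
      exact pathFactor_nonneg j
    refine (mul_le_mul (pathFactor_le_exp hks.1) (ih hks.2) hnonneg (exp_pos _).le).trans_eq ?_
    rw [← Real.exp_add]
    push_cast
    ring_nf

-- Jensen's inequality for `exp`, from its tangent at `-a * m`.
lemma length_mul_exp_neg_le_sum_exp_neg {ι : Type*} {a m : ℝ} (ha : 0 ≤ a) (f : ι → ℝ)
    {s : List ι} (h : (s.map f).sum ≤ m * s.length) :
    s.length * exp (-(a * m)) ≤ (s.map fun i => exp (-(a * f i))).sum := by
  have htangent (k : ℝ) : exp (-(a * m)) * (1 - a * (k - m)) ≤ exp (-(a * k)) := by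
    calc exp (-(a * m)) * (1 - a * (k - m)) ≤ exp (-(a * m)) * exp (-(a * (k - m))) := by
          gcongr
          exact Real.one_sub_le_exp_neg _
      _ = exp (-(a * k)) := by
          rw [← Real.exp_add]
          ring_nf
  have hsum (t : List ι) : exp (-(a * m)) * (t.length - a * ((t.map f).sum - m * t.length)) ≤
      (t.map fun i => exp (-(a * f i))).sum := by
    induction t with
    | nil => simp
    | cons i t ih =>
      simp only [List.length_cons, List.sum_cons, List.map_cons]
      push_cast
      linarith [htangent (f i)]
  refine le_trans ?_ (hsum s)
  rw [mul_comm]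
  gcongr
  linarith [mul_nonneg ha (sub_nonneg.2 h)]

end PathFactor

section UpperBound

variable {n : ℕ} {E : Finset (Sym2 (Fin n))} {Ps : List (List (Fin n))}

lemma det_coneLap_le_prod_pathFactor (hE : ∀ e ∈ E, ¬e.IsDiag) (hcard : E.card ≤ n)
    (hPs : MinimalFor (IsPathCoverOf n E) List.length Ps) :
    (coneLap E).det ≤ ((Ps.map List.length).map pathFactor).prod := by
  have hcover := hPs.1
  set Q := (Ps.flatMap pathEdges).toFinset
  have hQE : Q ⊆ E := hcover.flatMap_pathEdges_subset
  have hextra : (E \ Q).card ≤ Ps.length := by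
    have hlength : Q.card + Ps.length = n := hcover.card_pathEdges_add_length
    rw [Finset.card_sdiff_of_subset hQE]
    omega
  have hcount : Ps.countP (·.length = 1) = (Ps.map List.length).countP (· = 1) := by
    rw [List.countP_map]
    rfl
  have hpaths := det_coneLap_flatMap_pathEdges_le (fun l hl => (hcover.1 l hl).1)
    fun l hl => (hcover.1 l hl).2.1
  have hsqrt : 1 ≤ √5 := Real.one_le_sqrt.2 (by norm_num)
  calc (coneLap E).det ≤ bonusDet E := det_coneLap_le_bonusDet E
    _ ≤ √5 ^ (E \ Q).card * bonusDet Q := by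
      refine bonusDet_le_sqrt_five_pow_mul hQE fun e he S hQS hSE heS => ?_
      exact bonusDet_insert_le_of_minimal hE hPs hQS hSE (Finset.mem_sdiff.1 he).1 heS
    _ ≤ √5 ^ Ps.length * ((√5 / 2) ^ Ps.countP (·.length = 1) *
          (Ps.map fun l => (Nat.fib (2 * l.length) : ℝ)).prod) := by
      rw [bonusDet]
      gcongr
      · exact mul_nonneg (by positivity) (coneLap_det_pos Q).le
      · exact (coneLap_det_pos Q).le
      · exact one_le_sqrt_five_div_two
      · exact hcover.card_isolated_le
    _ = ((Ps.map List.length).map pathFactor).prod := by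
      rw [prod_pathFactor, List.length_map, hcount, List.map_map]
      rfl

lemma log_det_coneLap_le (hE : ∀ e ∈ E, ¬e.IsDiag) (hcard : E.card ≤ n) {δ : ℝ} (hδ : 0 < δ)
    (hcover : ∀ Ps, IsPathCoverOf n E Ps → δ * n ≤ Ps.length) :
    log (coneLap E).det ≤
      2 * log φ * n - δ * exp (-(4 * log φ * (δ⁻¹ + 1))) * n := by
  obtain ⟨Ps, hPs⟩ := exists_minimal_isPathCoverOf E
  set ks := Ps.map List.length
  have hsum : ks.sum = n := hPs.1.sum_length
  have hlength : δ * n ≤ ks.length := by simpa [ks] using hcover Ps hPs.1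
  have hne : ∀ k ∈ ks, k ≠ 0 := by
    simpa [ks] using fun l hl => (hPs.1.1 l hl).1
  have hmean : (ks.map fun k : ℕ => (k + 1 : ℝ)).sum ≤ (δ⁻¹ + 1) * ks.length := by
    have hsum_map : (ks.map fun k : ℕ => (k + 1 : ℝ)).sum = n + ks.length := by
      simp [List.sum_map_add, ← hsum]
    rw [hsum_map]
    linarith [(le_inv_mul_iff₀ hδ).2 hlength]
  have hjensen := length_mul_exp_neg_le_sum_exp_neg (a := 4 * log φ)
    (mul_nonneg zero_le_four (Real.log_nonneg Real.one_lt_goldenRatio.le)) _ hmean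
  have hgain := mul_le_mul_of_nonneg_right hlength (exp_pos (-(4 * log φ * (δ⁻¹ + 1)))).le
  have hdet := (det_coneLap_le_prod_pathFactor hE hcard hPs).trans (prod_pathFactor_le_exp hne)
  rw [← Real.log_le_iff_le_exp (coneLap_det_pos E), hsum] at hdet
  linarith

end UpperBound

section SpanningTrees

variable {V : Type*} [Fintype V] [DecidableEq V] {n : ℕ}

lemma edgeLap_eq_lapG {e : Sym2 V} (he : ¬e.IsDiag) :
    edgeLap e = lapG fun i j => if s(i, j) = e then 1 else 0 := by
  ext i j
  induction e with
  | _ a b =>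
    have hab : a ≠ b := he
    by_cases hij : i = j
    · subst hij
      by_cases hia : i = a
      · subst hia
        simp [lapG, edgeVec, vecMulVec_apply, hab]
      · by_cases hib : i = b
        · subst hib
          simp [lapG, edgeVec, vecMulVec_apply, hia, Sym2.eq_swap (b := i)]
        · simp [lapG, edgeVec, vecMulVec_apply, hia, hib]
    · simp only [lapG, if_neg hij, edgeLap_mk, vecMulVec_apply, edgeVec, Pi.sub_apply,
        Pi.single_apply, Sym2.eq_iff]
      grind

lemma sum_edgeLap_eq_lapG {S : Finset (Sym2 V)} (hS : ∀ e ∈ S, ¬e.IsDiag) :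
    ∑ e ∈ S, edgeLap e = lapG fun i j => if s(i, j) ∈ S then 1 else 0 := by
  ext i j
  rw [Finset.sum_congr rfl fun e he => edgeLap_eq_lapG (hS e he), Matrix.sum_apply]
  by_cases hij : i = j
  · simp only [lapG, if_pos hij]
    rw [Finset.sum_comm]
    simp
  · simp only [lapG, if_neg hij, Finset.sum_neg_distrib, Finset.sum_ite_eq]

lemma starW_castSucc (i j : Fin n) : starW n i.castSucc j.castSucc = 0 := by
  simp [starW, Fin.castSucc_ne_last]

lemma starPlusEdges_castSucc (P : Finset (Sym2 (Fin n))) (i j : Fin n) :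
    starPlusEdges n P i.castSucc j.castSucc = if s(i, j) ∈ P then 1 else 0 := by
  have hleaf : (∃ a b : Fin n, i.castSucc = a.castSucc ∧ j.castSucc = b.castSucc ∧
      s(a, b) ∈ P) ↔ s(i, j) ∈ P := by simp [Fin.castSucc_inj]
  simp only [starPlusEdges, hleaf, starW_castSucc, zero_add]

lemma starPlusEdges_castSucc_last (P : Finset (Sym2 (Fin n))) (i : Fin n) :
    starPlusEdges n P i.castSucc (Fin.last n) = 1 := by
  simp [starPlusEdges, starW, Fin.castSucc_ne_last, (Fin.castSucc_ne_last _).symm]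

lemma nst_starPlusEdges {P : Finset (Sym2 (Fin n))} (hP : ∀ e ∈ P, ¬e.IsDiag) :
    nst (starPlusEdges n P) = (coneLap P).det := by
  rw [nst, coneLap, sum_edgeLap_eq_lapG hP]
  congr 1
  ext i j
  simp only [submatrix_apply, Matrix.add_apply, Matrix.one_apply, lapG, Fin.castSucc_inj,
    Fin.sum_univ_castSucc, starPlusEdges_castSucc, starPlusEdges_castSucc_last]
  split_ifs <;> ring

lemma mem_pathEdges_finRange {i j : Fin n} :
    s(i, j) ∈ pathEdges (List.finRange n) ↔ (i : ℕ) + 1 = j ∨ (j : ℕ) + 1 = i := by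
  simp only [mem_pathEdges, List.getElem_finRange, List.length_finRange, Sym2.eq_iff, Fin.ext_iff,
    Fin.val_cast]
  constructor
  · rintro ⟨k, -, h⟩
    omega
  · rintro (h | h)
    · exact ⟨i, by omega, Or.inl ⟨rfl, h.symm⟩⟩
    · exact ⟨j, by omega, Or.inr ⟨h.symm, rfl⟩⟩

lemma fanW_eq_starPlusEdges (n : ℕ) :
    fanW n = starPlusEdges n (pathEdges (List.finRange n)).toFinset := by
  ext i j
  rw [fanW, starPlusEdges]
  congr 1
  simp only [List.mem_toFinset, mem_pathEdges_finRange]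
  refine if_congr ⟨?_, ?_⟩ rfl rfl
  · intro h
    simp only [ne_eq, Fin.ext_iff, Fin.val_last] at h
    exact ⟨⟨i, by omega⟩, ⟨j, by omega⟩, rfl, rfl, h.imp And.left And.left⟩
  · rintro ⟨a, b, rfl, rfl, h⟩
    simpa [Fin.castSucc_ne_last] using h

lemma goldenRatio_pow_le_fib : ∀ n : ℕ, φ ^ n ≤ Nat.fib (n + 2)
  | 0 => by simp
  | n + 1 => by
    have hfib : (Nat.fib (n + 3) : ℝ) = 2 * Nat.fib (n + 1) + Nat.fib n := by
      rw [Nat.fib_add_two, Nat.fib_add_two (n := n)]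
      push_cast
      ring
    rw [hfib, ← Real.goldenRatio_mul_fib_succ_add_fib]
    gcongr
    exact Real.goldenRatio_lt_two.le

lemma two_mul_log_goldenRatio_mul_le_log_nst_fanW (n : ℕ) :
    2 * log φ * (n - 1) ≤ log (nst (fanW n)) := by
  have hlog : 0 < log φ := Real.log_pos Real.one_lt_goldenRatio
  rcases n with _ | n
  · simp [nst, hlog.le]
  have hloopless : ∀ e ∈ (pathEdges (List.finRange (n + 1))).toFinset, ¬e.IsDiag := by
    intro e he
    induction e with
    | _ i j =>
      rw [List.mem_toFinset, mem_pathEdges_finRange] at he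
      rw [Sym2.mk_isDiag_iff]
      omega
  have hfib := fib_le_det_coneLap_pathEdges (0 : Fin (n + 1)) ((List.finRange n).map Fin.succ)
    (by rw [← List.finRange_succ]; exact List.nodup_finRange _)
  rw [← List.finRange_succ, List.length_map, List.length_finRange] at hfib
  rw [fanW_eq_starPlusEdges, nst_starPlusEdges hloopless]
  calc 2 * log φ * ((n + 1 : ℕ) - 1) = log (φ ^ (2 * n)) := by
        rw [Real.log_pow]
        push_cast
        ring
    _ ≤ log (coneLap (pathEdges (List.finRange (n + 1))).toFinset).det := by
        gcongr
        exact (goldenRatio_pow_le_fib (2 * n)).trans hfib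

end SpanningTrees

lemma exists_linear_gap {L κ : ℝ} (hL : 0 < L) (hκ : 0 < κ) :
    ∃ c : ℝ, 0 < c ∧ ∃ N : ℕ, ∀ n : ℕ, N ≤ n → ∀ y : ℝ, L * (n - 1) ≤ y →
      L * n - κ * n ≤ (1 - c) * y := by
  refine ⟨min (1 / 2) (κ / (2 * L)), by positivity, ⌈2 * L / κ⌉₊, fun n hn y hy => ?_⟩
  set c := min (1 / 2) (κ / (2 * L))
  have hc : c ≤ 1 / 2 := min_le_left _ _
  have hcL : c * L ≤ κ / 2 := by
    have := min_le_right (1 / 2) (κ / (2 * L))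
    calc c * L ≤ κ / (2 * L) * L := by gcongr
      _ = κ / 2 := by field_simp
  have hκn : L ≤ κ / 2 * n := by
    have := (div_le_iff₀ hκ).1 (Nat.ceil_le.1 hn)
    linarith
  have hc0 : 0 < c := by positivity
  calc L * n - κ * n ≤ (1 - c) * (L * (n - 1)) := by
        nlinarith [mul_le_mul_of_nonneg_right hcL (Nat.cast_nonneg (α := ℝ) n), mul_pos hc0 hL]
    _ ≤ (1 - c) * y := by
        gcongr
        linarith

theorem stmt13 (δ : ℝ) (hδ0 : 0 < δ) (hδ1 : δ < 1) :
    ∃ c : ℝ, 0 < c ∧ ∃ N : ℕ, ∀ n : ℕ, N ≤ n →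
      ∀ E' : Finset (Sym2 (Fin n)), (∀ e ∈ E', ¬ e.IsDiag) →
        (¬ ∃ Ps : List (List (Fin n)), IsPathCoverOf n E' Ps ∧ (Ps.length : ℝ) < δ * n) →
        ∀ P : Finset (Sym2 (Fin n)), P ⊆ E' → P.card ≤ n - 1 →
          Real.log (nst (starPlusEdges n P)) ≤ (1 - c) * Real.log (nst (fanW n)) := by
  have hφ : 0 < 2 * log φ := mul_pos two_pos (Real.log_pos Real.one_lt_goldenRatio)
  obtain ⟨c, hc, N, hgap⟩ :=
    exists_linear_gap hφ (mul_pos hδ0 (exp_pos (-(4 * log φ * (δ⁻¹ + 1)))))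
  refine ⟨c, hc, N, fun n hn E' hE' hcover P hP hcard => ?_⟩
  have hloopless : ∀ e ∈ P, ¬e.IsDiag := fun e he => hE' e (hP he)
  have hlarge : ∀ Ps, IsPathCoverOf n P Ps → δ * n ≤ Ps.length := fun Ps hPs =>
    not_lt.1 fun hlt => hcover ⟨Ps, hPs.mono hP, hlt⟩
  calc log (nst (starPlusEdges n P)) = log (coneLap P).det := by rw [nst_starPlusEdges hloopless]
    _ ≤ 2 * log φ * n - δ * exp (-(4 * log φ * (δ⁻¹ + 1))) * n :=
        log_det_coneLap_le hloopless (hcard.trans (Nat.sub_le n 1)) hδ0 hlarge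
    _ ≤ (1 - c) * log (nst (fanW n)) :=
        hgap n hn _ (two_mul_log_goldenRatio_mul_le_log_nst_fanW n)
end

section
/- Let G be a connected weighted undirected graph on vertex set V with positive edge weights and Laplacian L, let V₁ be a nonempty proper subset of V and V₂ = V ∖ V₁. Then the block L[V₂,V₂] is invertible, and for the Schur complement SC(L, V₁) = L[V₁,V₁] − L[V₁,V₂] · L[V₂,V₂]^{−1} · L[V₂,V₁] and any two vertices u, v ∈ V₁, the effective resistances agree: for any vector x solving L x = e_u − e_v and any vector y solving SC(L,V₁) y = ê_u − ê_v (where ê denotes standard basis vectors indexed by V₁), one has (e_u − e_v)ᵀ x = (ê_u − ê_v)ᵀ y. -/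
open Matrix

/-!
Extending a potential `y` on `V₁` to `V₂` by `-L[V₂,V₂]⁻¹ L[V₂,V₁] y` makes `L` vanish on `V₂` and
act as the Schur complement on `V₁`. So if `y` solves the reduced system with right-hand side
`b`, then its extension solves the full system with `b` extended by zero; and for a symmetric matrix
`L`, the number `bᵀ x` is the same for all solutions of `L x = b`.

The block `L[V₂,V₂]` is positive definite because `xᵀ L x` is a weighted sum of squared differences
along the edges, which on a connected graph is positive unless `x` is constant; a nonzero vector
extended by zero from `V₂` to the nonempty set `V₁` is not constant.
-/

section SchurComplement

variable {m n R : Type*} [Fintype m] [Fintype n]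

theorem dotProduct_eq_of_isSymm_of_mulVec_eq [CommSemiring R] {A : Matrix n n R} (hA : A.IsSymm)
    {b x x' : n → R} (hx : A *ᵥ x = b) (hx' : A *ᵥ x' = b) : b ⬝ᵥ x = b ⬝ᵥ x' :=
  calc
    b ⬝ᵥ x = x ⬝ᵥ A *ᵥ x' := by rw [hx', dotProduct_comm]
    _ = A *ᵥ x ⬝ᵥ x' := by rw [dotProduct_mulVec, ← mulVec_transpose, hA.eq]
    _ = b ⬝ᵥ x' := by rw [hx]

theorem mulVec_sumElim [NonUnitalNonAssocSemiring R] (A : Matrix (m ⊕ n) (m ⊕ n) R)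
    (p : m → R) (q : n → R) :
    A *ᵥ Sum.elim p q =
      Sum.elim (A.toBlocks₁₁ *ᵥ p + A.toBlocks₁₂ *ᵥ q)
        (A.toBlocks₂₁ *ᵥ p + A.toBlocks₂₂ *ᵥ q) := by
  conv_lhs => rw [← fromBlocks_toBlocks A, fromBlocks_mulVec]
  rw [Sum.elim_comp_inl, Sum.elim_comp_inr]

theorem dotProduct_mulVec_sumElim_zero [NonUnitalNonAssocSemiring R]
    (A : Matrix (m ⊕ n) (m ⊕ n) R) (z : n → R) :
    Sum.elim 0 z ⬝ᵥ A *ᵥ Sum.elim 0 z = z ⬝ᵥ A.toBlocks₂₂ *ᵥ z := by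
  rw [mulVec_sumElim, sumElim_dotProduct_sumElim, zero_dotProduct, zero_add, mulVec_zero, zero_add]

variable [DecidableEq n] [CommRing R]

/-- The Schur complement of a block matrix onto its first index set, `SC(A, V₁)` with `V₁ = m`.
The nonsingular inverse is `0` when the lower right block is not invertible. -/
noncomputable def schurComplement (A : Matrix (m ⊕ n) (m ⊕ n) R) : Matrix m m R :=
  A.toBlocks₁₁ - A.toBlocks₁₂ * A.toBlocks₂₂⁻¹ * A.toBlocks₂₁

/-- The harmonic extension of a vector `y` on the first index set: for invertible `A.toBlocks₂₂` it
is the only extension of `y` that `A` maps to a vector vanishing on the second index set. It lifts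
solutions of the reduced system `schurComplement A *ᵥ y = b` to the full one. -/
noncomputable def harmonicExtension (A : Matrix (m ⊕ n) (m ⊕ n) R) (y : m → R) : m ⊕ n → R :=
  Sum.elim y (-(A.toBlocks₂₂⁻¹ *ᵥ A.toBlocks₂₁ *ᵥ y))

theorem mulVec_harmonicExtension {A : Matrix (m ⊕ n) (m ⊕ n) R} (hA : IsUnit A.toBlocks₂₂)
    (y : m → R) :
    A *ᵥ harmonicExtension A y = Sum.elim (schurComplement A *ᵥ y) 0 := by
  rw [harmonicExtension, mulVec_sumElim]
  congr 1
  · rw [schurComplement, sub_mulVec, mulVec_neg, ← sub_eq_add_neg, mulVec_mulVec, mulVec_mulVec,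
      Matrix.mul_assoc]
  · rw [mulVec_neg, mulVec_mulVec, mul_nonsing_inv _ ((isUnit_iff_isUnit_det _).1 hA), one_mulVec,
      add_neg_cancel]

theorem sumElim_zero_dotProduct_harmonicExtension (A : Matrix (m ⊕ n) (m ⊕ n) R) (b y : m → R) :
    Sum.elim b 0 ⬝ᵥ harmonicExtension A y = b ⬝ᵥ y := by
  rw [harmonicExtension, sumElim_dotProduct_sumElim, zero_dotProduct, add_zero]

theorem sumElim_zero_dotProduct_eq_of_schurComplement_mulVec_eq {A : Matrix (m ⊕ n) (m ⊕ n) R}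
    (hA : A.IsSymm) (hA₂₂ : IsUnit A.toBlocks₂₂) {b y : m → R} {x : m ⊕ n → R}
    (hx : A *ᵥ x = Sum.elim b 0) (hy : schurComplement A *ᵥ y = b) :
    Sum.elim b 0 ⬝ᵥ x = b ⬝ᵥ y := by
  have hext : A *ᵥ harmonicExtension A y = Sum.elim b 0 := by
    rw [mulVec_harmonicExtension hA₂₂, hy]
  rw [dotProduct_eq_of_isSymm_of_mulVec_eq hA hx hext, sumElim_zero_dotProduct_harmonicExtension]

end SchurComplement

theorem exists_adj_ne_of_preconnected {V X : Type*} {G : SimpleGraph V} (hG : G.Preconnected)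
    {f : V → X} {a b : V} (hab : f a ≠ f b) : ∃ i j, G.Adj i j ∧ f i ≠ f j := by
  obtain ⟨p⟩ := hG a b
  obtain ⟨d, -, hfst, hsnd⟩ := p.exists_boundary_dart {w | f w = f a} rfl hab.symm
  exact ⟨d.fst, d.snd, d.adj, fun h => hsnd (h.symm.trans hfst)⟩

section Laplacian

variable {V : Type*} [Fintype V] [DecidableEq V] {W : V → V → ℝ}

theorem isSymm_lapG (hsym : ∀ i j, W i j = W j i) : (lapG W).IsSymm := by
  refine IsSymm.ext fun i j => ?_
  rcases eq_or_ne i j with rfl | hij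
  · rfl
  · simp only [lapG, if_neg hij, if_neg hij.symm, hsym i j]

theorem lapG_mulVec_apply (hdiag : ∀ i, W i i = 0) (x : V → ℝ) (i : V) :
    (lapG W *ᵥ x) i = ∑ j, W i j * (x i - x j) := by
  have hterm : ∀ j, lapG W i j * x j =
      (if i = j then (∑ k, W i k) * x i else 0) - W i j * x j := by
    intro j
    rcases eq_or_ne i j with rfl | hij
    · simp [lapG, hdiag]
    · simp [lapG, hij]
  simp only [mulVec, dotProduct, hterm, Finset.sum_sub_distrib, mul_sub, Finset.sum_ite_eq,
    Finset.mem_univ, if_true, Finset.sum_mul]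

theorem dotProduct_lapG_mulVec (hsym : ∀ i j, W i j = W j i) (hdiag : ∀ i, W i i = 0)
    (x : V → ℝ) :
    x ⬝ᵥ lapG W *ᵥ x = (∑ i, ∑ j, W i j * (x i - x j) ^ 2) / 2 := by
  have hrow : x ⬝ᵥ lapG W *ᵥ x = ∑ i, ∑ j, x i * (W i j * (x i - x j)) := by
    simp only [dotProduct, lapG_mulVec_apply hdiag, Finset.mul_sum]
  have hcol : x ⬝ᵥ lapG W *ᵥ x = ∑ i, ∑ j, x j * (W i j * (x j - x i)) := by
    rw [hrow, Finset.sum_comm]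
    simp only [hsym]
  have hsum : x ⬝ᵥ lapG W *ᵥ x + x ⬝ᵥ lapG W *ᵥ x = ∑ i, ∑ j, W i j * (x i - x j) ^ 2 := by
    nth_rewrite 1 [hrow]
    rw [hcol]
    simp only [← Finset.sum_add_distrib]
    refine Finset.sum_congr rfl fun i _ => Finset.sum_congr rfl fun j _ => ?_
    ring
  rw [← hsum, add_self_div_two]

theorem dotProduct_lapG_mulVec_pos (hsym : ∀ i j, W i j = W j i) (hdiag : ∀ i, W i i = 0)
    (hnonneg : ∀ i j, 0 ≤ W i j)
    (hconn : (SimpleGraph.fromRel fun i j => W i j ≠ 0).Preconnected)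
    {x : V → ℝ} {a b : V} (hab : x a ≠ x b) : 0 < x ⬝ᵥ lapG W *ᵥ x := by
  obtain ⟨i, j, hadj, hij⟩ := exists_adj_ne_of_preconnected hconn hab
  have hW : W i j ≠ 0 := by
    obtain ⟨-, h | h⟩ := (SimpleGraph.fromRel_adj _ _ _).1 hadj
    exacts [h, hsym i j ▸ h]
  have hterm : ∀ k l, 0 ≤ W k l * (x k - x l) ^ 2 := fun k l =>
    mul_nonneg (hnonneg k l) (sq_nonneg _)
  have hpos : 0 < W i j * (x i - x j) ^ 2 :=
    mul_pos ((hnonneg i j).lt_of_ne' hW) (sq_pos_of_ne_zero (sub_ne_zero.2 hij))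
  rw [dotProduct_lapG_mulVec hsym hdiag]
  exact half_pos <| Finset.sum_pos' (fun k _ => Finset.sum_nonneg fun l _ => hterm k l)
    ⟨i, Finset.mem_univ i, Finset.sum_pos' (fun l _ => hterm i l) ⟨j, Finset.mem_univ j, hpos⟩⟩

end Laplacian

theorem posDef_toBlocks₂₂_lapG {α β : Type*} [Fintype α] [Fintype β] [DecidableEq α]
    [DecidableEq β] [Nonempty α] {W : α ⊕ β → α ⊕ β → ℝ} (hsym : ∀ i j, W i j = W j i)
    (hdiag : ∀ i, W i i = 0) (hnonneg : ∀ i j, 0 ≤ W i j)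
    (hconn : (SimpleGraph.fromRel fun i j => W i j ≠ 0).Preconnected) :
    (lapG W).toBlocks₂₂.PosDef := by
  refine .of_dotProduct_mulVec_pos
    (isHermitian_iff_isSymm.2 ((isSymm_lapG hsym).submatrix Sum.inr)) fun z hz => ?_
  obtain ⟨b, hb⟩ := Function.ne_iff.1 hz
  obtain ⟨a⟩ := ‹Nonempty α›
  have hne : (Sum.elim 0 z : α ⊕ β → ℝ) (Sum.inr b) ≠ (Sum.elim 0 z : α ⊕ β → ℝ) (Sum.inl a) := hb
  rw [star_trivial, ← dotProduct_mulVec_sumElim_zero]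
  exact dotProduct_lapG_mulVec_pos hsym hdiag hnonneg hconn hne

theorem stmt17 (α β : Type*) [Fintype α] [Fintype β] [DecidableEq α] [DecidableEq β]
    [Nonempty α] [Nonempty β]
    (W : (α ⊕ β) → (α ⊕ β) → ℝ)
    (hsym : ∀ i j, W i j = W j i) (hdiag : ∀ i, W i i = 0) (hnonneg : ∀ i j, 0 ≤ W i j)
    (hconn : (SimpleGraph.fromRel (fun i j => W i j ≠ 0)).Connected) :
    IsUnit (lapG W).toBlocks₂₂ ∧
      ∀ u v : α, ∀ x : (α ⊕ β) → ℝ, ∀ y : α → ℝ,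
        (lapG W).mulVec x = Pi.single (Sum.inl u) 1 - Pi.single (Sum.inl v) 1 →
        ((lapG W).toBlocks₁₁ -
            (lapG W).toBlocks₁₂ * ((lapG W).toBlocks₂₂)⁻¹ * (lapG W).toBlocks₂₁).mulVec y =
          Pi.single u 1 - Pi.single v 1 →
        (Pi.single (Sum.inl u) 1 - Pi.single (Sum.inl v) 1) ⬝ᵥ x =
          (Pi.single u 1 - Pi.single v 1) ⬝ᵥ y := by
  have h₂₂ : IsUnit (lapG W).toBlocks₂₂ :=
    (posDef_toBlocks₂₂_lapG hsym hdiag hnonneg hconn.preconnected).isUnit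
  refine ⟨h₂₂, fun u v x y hx hy => ?_⟩
  have hsingle : Sum.elim (Pi.single u 1 - Pi.single v 1) (0 : β → ℝ) =
      Pi.single (Sum.inl u) 1 - Pi.single (Sum.inl v) 1 := by
    rw [← sub_zero (0 : β → ℝ), Sum.elim_sub_sub, Sum.elim_single_zero, Sum.elim_single_zero]
  rw [← hsingle] at hx ⊢
  exact sumElim_zero_dotProduct_eq_of_schurComplement_mulVec_eq (isSymm_lapG hsym) h₂₂ hx hy
end

section
/- Let A and B be real symmetric positive semidefinite n×n matrices and let 0 < ε ≤ 1/2 satisfy (1 − ε)·A ≼ B ≼ (1 + ε)·A in the Loewner order (i.e., (1−ε)·xᵀAx ≤ xᵀBx ≤ (1+ε)·xᵀAx for all vectors x). Then for every vector b in the column space of A, b is also in the column space of B, and for any vectors x, y with A x = b and B y = b, it holds that (1 − 2ε)·bᵀx ≤ bᵀy ≤ (1 + 2ε)·bᵀx. -/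
/-!
If `A x = B y = b`, then `bᵀy = yᵀBy = xᵀAy`, and Cauchy–Schwarz for `A` gives
`(yᵀBy)² ≤ xᵀAx · yᵀAy`. Hence an upper bound `c A ≼ d B` turns into `c bᵀy ≤ d bᵀx`: passing to
(pseudo)inverses reverses the Loewner order. Applying this to `(1 - ε) A ≼ B` and `B ≼ (1 + ε) A`
leaves `1 ≤ (1 - ε)(1 + 2ε)` and `(1 + ε)(1 - 2ε) ≤ 1`, valid for `0 ≤ ε ≤ 1 / 2`. Solvability of
`B y = b` is dual to `ker B ≤ ker A`: if `B v = 0`, then `vᵀAv = 0`, so `A v = 0` by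
Cauchy–Schwarz.
-/

open Matrix

section BilinForm

open LinearMap (BilinForm)

section OrderedRing

variable {R M : Type*} [CommRing R] [LinearOrder R] [IsStrictOrderedRing R] [AddCommGroup M]
  [Module R M] {A B : BilinForm R M} {c d : R}

theorem ker_le_ker_of_mul_apply_self_le (hA : LinearMap.IsPosSemidef A) (hc : 0 < c)
    (h : ∀ v, c * A v v ≤ B v v) : LinearMap.ker B ≤ LinearMap.ker A := by
  intro v hv
  have hBv : B v v = 0 := by rw [LinearMap.mem_ker.1 hv, LinearMap.zero_apply]
  have hAv : A v v ≤ 0 := nonpos_of_mul_nonpos_right ((h v).trans_eq hBv) hc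
  exact (A.apply_apply_same_eq_zero_iff hA.nonneg hA.isSymm).1 (hAv.antisymm (hA.nonneg v))

theorem mul_apply_self_le_mul_apply_self_of_flip_eq (hA : LinearMap.IsPosSemidef A)
    (hc : 0 ≤ c) (hd : 0 ≤ d) (h : ∀ v, c * A v v ≤ d * B v v) {x y : M}
    (hxy : LinearMap.flip A x = LinearMap.flip B y) : c * B y y ≤ d * A x x := by
  obtain hy | hy := le_or_gt (B y y) 0
  · exact (mul_nonpos_of_nonneg_of_nonpos hc hy).trans (mul_nonneg hd (hA.nonneg x))
  have hAxy : A x y = B y y := (hA.isSymm.eq x y).trans (LinearMap.congr_fun hxy y)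
  refine le_of_mul_le_mul_right ?_ hy
  calc c * B y y * B y y = c * A x y ^ 2 := by rw [hAxy]; ring
    _ ≤ c * (A x x * A y y) :=
      mul_le_mul_of_nonneg_left (A.apply_sq_le_of_symm hA.nonneg hA.isSymm x y) hc
    _ = A x x * (c * A y y) := by ring
    _ ≤ A x x * (d * B y y) := mul_le_mul_of_nonneg_left (h y) (hA.nonneg x)
    _ = d * A x x * B y y := by ring

end OrderedRing

theorem range_flip_le_range_flip_of_ker_le_ker {K V W : Type*} [Field K] [AddCommGroup V]
    [Module K V] [AddCommGroup W] [Module K W] [FiniteDimensional K W]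
    {A B : V →ₗ[K] W →ₗ[K] K} (h : LinearMap.ker B ≤ LinearMap.ker A) :
    LinearMap.range A.flip ≤ LinearMap.range B.flip := by
  simpa only [LinearMap.dualAnnihilator_ker_eq_range_flip] using Submodule.dualAnnihilator_anti h

end BilinForm

section Matrix

variable {ι K : Type*} [Fintype ι]

theorem flip_toBilin'_apply [CommSemiring K] [DecidableEq ι] (A : Matrix ι ι K) (x : ι → K) :
    LinearMap.flip (toBilin' A) x = dotProductEquiv K ι (A *ᵥ x) := by
  ext
  simp [toBilin'_apply']

theorem isPosSemidef_toBilin' [CommSemiring K] [LE K] [DecidableEq ι] {A : Matrix ι ι K}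
    (hA : A.IsSymm) (hA₀ : ∀ v, 0 ≤ v ⬝ᵥ A *ᵥ v) : LinearMap.IsPosSemidef (toBilin' A) where
  eq := (LinearMap.BilinForm.isSymm_iff.1 (isSymm_toBilin'_iff_isSymm.2 hA)).eq
  nonneg v := by simpa only [toBilin'_apply'] using hA₀ v

theorem mul_dotProduct_le_mul_dotProduct_of_mulVec_eq [CommRing K] [LinearOrder K]
    [IsStrictOrderedRing K] {A B : Matrix ι ι K} (hA : A.IsSymm) (hA₀ : ∀ v, 0 ≤ v ⬝ᵥ A *ᵥ v)
    {c d : K} (hc : 0 ≤ c) (hd : 0 ≤ d) (h : ∀ v, c * (v ⬝ᵥ A *ᵥ v) ≤ d * (v ⬝ᵥ B *ᵥ v))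
    {b x y : ι → K} (hx : A *ᵥ x = b) (hy : B *ᵥ y = b) : c * (b ⬝ᵥ y) ≤ d * (b ⬝ᵥ x) := by
  classical
  have hxy : LinearMap.flip (toBilin' A) x = LinearMap.flip (toBilin' B) y := by
    rw [flip_toBilin'_apply, flip_toBilin'_apply, hx, hy]
  have key := mul_apply_self_le_mul_apply_self_of_flip_eq (isPosSemidef_toBilin' hA hA₀) hc hd
    (by simpa only [toBilin'_apply'] using h) hxy
  simpa only [toBilin'_apply', hx, hy, dotProduct_comm _ b] using key

variable [Field K] [LinearOrder K] [IsStrictOrderedRing K] {A B : Matrix ι ι K}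

theorem range_mulVecLin_le_of_mul_dotProduct_mulVec_le (hA : A.IsSymm)
    (hA₀ : ∀ v, 0 ≤ v ⬝ᵥ A *ᵥ v) {c : K} (hc : 0 < c)
    (h : ∀ v, c * (v ⬝ᵥ A *ᵥ v) ≤ v ⬝ᵥ B *ᵥ v) :
    LinearMap.range A.mulVecLin ≤ LinearMap.range B.mulVecLin := by
  classical
  have hker := ker_le_ker_of_mul_apply_self_le (B := toBilin' B) (isPosSemidef_toBilin' hA hA₀) hc
    (by simpa only [toBilin'_apply'] using h)
  rintro _ ⟨x, rfl⟩
  obtain ⟨y, hy⟩ := range_flip_le_range_flip_of_ker_le_ker hker ⟨x, rfl⟩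
  rw [flip_toBilin'_apply, flip_toBilin'_apply] at hy
  exact ⟨y, (dotProductEquiv K ι).injective hy⟩

theorem stmt18_general (hA : A.IsSymm) (hB : B.IsSymm) {ε : K} (hε0 : 0 < ε) (hε : ε ≤ 1 / 2)
    (h1 : ∀ x, (1 - ε) * (x ⬝ᵥ A *ᵥ x) ≤ x ⬝ᵥ B *ᵥ x)
    (h2 : ∀ x, x ⬝ᵥ B *ᵥ x ≤ (1 + ε) * (x ⬝ᵥ A *ᵥ x)) (b : ι → K) (hb : ∃ z, A *ᵥ z = b) :
    (∃ y, B *ᵥ y = b) ∧ ∀ x y, A *ᵥ x = b → B *ᵥ y = b →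
      (1 - 2 * ε) * (b ⬝ᵥ x) ≤ b ⬝ᵥ y ∧ b ⬝ᵥ y ≤ (1 + 2 * ε) * (b ⬝ᵥ x) := by
  have hε1 : 0 < 1 - ε := by linarith
  have hε2 : 0 ≤ 1 - 2 * ε := by linarith
  have hA₀ (v : ι → K) : 0 ≤ v ⬝ᵥ A *ᵥ v :=
    nonneg_of_mul_nonneg_right (by linarith [h1 v, h2 v] : 0 ≤ 2 * ε * _) (by positivity)
  have hB₀ (v : ι → K) : 0 ≤ v ⬝ᵥ B *ᵥ v := (mul_nonneg hε1.le (hA₀ v)).trans (h1 v)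
  refine ⟨range_mulVecLin_le_of_mul_dotProduct_mulVec_le hA hA₀ hε1 h1 hb, fun x y hx hy ↦ ?_⟩
  have hby : 0 ≤ b ⬝ᵥ y := by simpa only [hy, dotProduct_comm y] using hB₀ y
  have lower : b ⬝ᵥ x ≤ (1 + ε) * (b ⬝ᵥ y) := by
    simpa only [one_mul] using mul_dotProduct_le_mul_dotProduct_of_mulVec_eq hB hB₀ zero_le_one
      (by positivity) (by simpa only [one_mul] using h2) hy hx
  have upper : (1 - ε) * (b ⬝ᵥ y) ≤ b ⬝ᵥ x := by
    simpa only [one_mul] using mul_dotProduct_le_mul_dotProduct_of_mulVec_eq hA hA₀ hε1.le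
      zero_le_one (by simpa only [one_mul] using h1) hx hy
  constructor
  · calc (1 - 2 * ε) * (b ⬝ᵥ x) ≤ (1 - 2 * ε) * ((1 + ε) * (b ⬝ᵥ y)) := by gcongr
      _ = ((1 + ε) * (1 - 2 * ε)) * (b ⬝ᵥ y) := by ring
      _ ≤ b ⬝ᵥ y := mul_le_of_le_one_left hby (by nlinarith)
  · calc b ⬝ᵥ y ≤ ((1 - ε) * (1 + 2 * ε)) * (b ⬝ᵥ y) := le_mul_of_one_le_left hby (by nlinarith)
      _ = (1 + 2 * ε) * ((1 - ε) * (b ⬝ᵥ y)) := by ring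
      _ ≤ (1 + 2 * ε) * (b ⬝ᵥ x) := by gcongr

end Matrix

theorem stmt18 (n : ℕ) (A B : Matrix (Fin n) (Fin n) ℝ)
    (hA : A.PosSemidef) (hB : B.PosSemidef)
    (ε : ℝ) (hε0 : 0 < ε) (hε : ε ≤ 1 / 2)
    (h1 : ∀ x : Fin n → ℝ, (1 - ε) * (x ⬝ᵥ A.mulVec x) ≤ x ⬝ᵥ B.mulVec x)
    (h2 : ∀ x : Fin n → ℝ, x ⬝ᵥ B.mulVec x ≤ (1 + ε) * (x ⬝ᵥ A.mulVec x)) :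
    ∀ b : Fin n → ℝ, (∃ z : Fin n → ℝ, A.mulVec z = b) →
      (∃ y : Fin n → ℝ, B.mulVec y = b) ∧
        ∀ x y : Fin n → ℝ, A.mulVec x = b → B.mulVec y = b →
          (1 - 2 * ε) * (b ⬝ᵥ x) ≤ b ⬝ᵥ y ∧ b ⬝ᵥ y ≤ (1 + 2 * ε) * (b ⬝ᵥ x) :=
  stmt18_general (isHermitian_iff_isSymm.1 hA.1) (isHermitian_iff_isSymm.1 hB.1) hε0 hε h1 h2
end
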